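/- arXiv:1303.6915 — 2 statements merged into one kernel-verified Lean document; each statement's English description precedes it below -/
import Mathlib

section
/- Let q ≥ 3 and let a₁ ≤ a₂ ≤ ⋯ ≤ a_q be positive integers, with V = ℂ^{a₁+1} ⊗ ⋯ ⊗ ℂ^{a_q+1}. If k is a positive integer with k ≤ (Π_{i=1}^q(a_i+1) − (a₁+a₂+a₃+1)·Π_{i=3}^q(a_i+1))/(1+Σ_{i=1}^q a_i), then there is a polynomial function F on W_k, not identically zero, such that whenever F ≠ 0 at ((v_{i,j}))_{i,j} ∈ W_k, the sum of the tangent spaces T_{t₁} + ⋯ + T_{t_k} at the decomposable tensors tᵢ = v_{i,1}⊗⋯⊗v_{i,q} has dimension exactly k(1+Σ_{i=1}^q a_i). (By Terracini's lemma this says that the k-th secant variety of the Segre variety has the expected dimension k(1+Σ_{i=1}^q a_i) − 1.) -/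
open scoped TensorProduct
open PiTensorProduct

noncomputable section

/-- The space of tensors `V = ℂ^{a₁+1} ⊗ ⋯ ⊗ ℂ^{a_q+1}`. -/
abbrev Ten (q : ℕ) (a : Fin q → ℕ) : Type :=
  ⨂[ℂ] i : Fin q, (Fin (a i + 1) → ℂ)

/-- Index type for the coordinates on the parameter space `W_k`. -/
abbrev WIdx (q : ℕ) (a : Fin q → ℕ) (k : ℕ) : Type :=
  Fin k × Σ j : Fin q, Fin (a j + 1)

/-- Index type for the standard (decomposable) basis of `Ten q a`. -/
abbrev BIdx (q : ℕ) (a : Fin q → ℕ) : Type := ∀ j : Fin q, Fin (a j + 1)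

/-- A tensor is decomposable if it is `v₁ ⊗ ⋯ ⊗ v_q` with all `vᵢ ≠ 0`. -/
def IsDecomposable {q : ℕ} {a : Fin q → ℕ} (t : Ten q a) : Prop :=
  ∃ v : ∀ j : Fin q, Fin (a j + 1) → ℂ, (∀ j, v j ≠ 0) ∧ t = tprod ℂ v

/-- The affine tangent space at `v₁ ⊗ ⋯ ⊗ v_q` to the cone over the Segre variety:
the span of all tensors obtained by replacing one factor of `v` by an arbitrary vector. -/
def tangent {q : ℕ} (a : Fin q → ℕ) (v : ∀ j : Fin q, Fin (a j + 1) → ℂ) :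
    Submodule ℂ (Ten q a) :=
  Submodule.span ℂ
    {x | ∃ (j : Fin q) (u : Fin (a j + 1) → ℂ), x = tprod ℂ (Function.update v j u)}

/-- The map `Φ : W_k → V` sending a `k`-tuple of factor vectors to the sum of the
corresponding decomposable tensors. -/
def Phi {q : ℕ} (a : Fin q → ℕ) {k : ℕ}
    (p : Fin k → ∀ j : Fin q, Fin (a j + 1) → ℂ) : Ten q a :=
  ∑ i, tprod ℂ (p i)

/-- Evaluation of a polynomial function on `W_k` at a parameter point. -/
def evalW {q : ℕ} {a : Fin q → ℕ} {k : ℕ}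
    (F : MvPolynomial (WIdx q a k) ℂ)
    (p : Fin k → ∀ j : Fin q, Fin (a j + 1) → ℂ) : ℂ :=
  MvPolynomial.eval (fun x => p x.1 x.2.1 x.2.2) F

/-- `k`-identifiability of the Segre product `ℙ^{a₁} × ⋯ × ℙ^{a_q}`:
there is a nonzero polynomial function `F` on `W_k` such that whenever `F(p) ≠ 0`,
the tensor `Φ(p)` has a rank-`k` decomposition, and any two rank-`k` decompositions
of `Φ(p)` agree as multisets of decomposable tensors. -/
def Identifiable (q : ℕ) (a : Fin q → ℕ) (k : ℕ) : Prop :=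
  ∃ F : MvPolynomial (WIdx q a k) ℂ,
    (∃ p, evalW F p ≠ 0) ∧
    ∀ p, evalW F p ≠ 0 →
      ((∃ t : Fin k → Ten q a, (∀ i, IsDecomposable (t i)) ∧ ∑ i, t i = Phi a p) ∧
       ∀ s t : Fin k → Ten q a,
         (∀ i, IsDecomposable (s i)) → (∀ i, IsDecomposable (t i)) →
         ∑ i, s i = Phi a p → ∑ i, t i = Phi a p →
         Finset.univ.val.map s = Finset.univ.val.map t)

/-- The standard decomposable basis vector of `Ten q a` indexed by `f`. -/
def basisVec {q : ℕ} (a : Fin q → ℕ) (f : BIdx q a) : Ten q a :=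
  tprod ℂ fun j => Pi.single (f j) 1

/-- The vector of `Ten q a` with coordinates `c` in the standard basis. -/
def fromCoords {q : ℕ} (a : Fin q → ℕ) (c : BIdx q a → ℂ) : Ten q a :=
  ∑ f : BIdx q a, c f • basisVec a f

/-- Evaluation of a polynomial function on `W_k × V^e` at a parameter point. -/
def evalWV {q : ℕ} {a : Fin q → ℕ} {k e : ℕ}
    (F : MvPolynomial (WIdx q a k ⊕ (Fin e × BIdx q a)) ℂ)
    (p : Fin k → ∀ j : Fin q, Fin (a j + 1) → ℂ)
    (c : Fin e → BIdx q a → ℂ) : ℂ :=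
  MvPolynomial.eval (Sum.elim (fun x => p x.1 x.2.1 x.2.2) (fun y => c y.1 y.2)) F

/-- `TangentGeneral q a k d` says: the general linear subspace of `V` of dimension `d`
which is tangent to the Segre at `k` general points is tangent only at those points.
Concretely, with `e = d - k(1 + Σᵢ aᵢ)`, there is a nonzero polynomial function `F` on
`W_k × V^e` such that whenever `F ≠ 0` at `(p, c)`, the space `L` spanned by the tangent
spaces at the `k` decomposable tensors determined by `p` together with the `e` extra
vectors determined by `c` has dimension exactly `d`, and any decomposable tensor whose
tangent space lies in `L` is a scalar multiple of one of the `k` given ones. -/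
def TangentGeneral (q : ℕ) (a : Fin q → ℕ) (k d : ℕ) : Prop :=
  ∃ F : MvPolynomial (WIdx q a k ⊕ (Fin (d - k * (1 + ∑ j, a j)) × BIdx q a)) ℂ,
    (∃ p c, evalWV F p c ≠ 0) ∧
    ∀ p c, evalWV F p c ≠ 0 →
      (Module.finrank ℂ
          ↥((⨆ i, tangent a (p i)) ⊔
            Submodule.span ℂ (Set.range fun m => fromCoords a (c m))) = d ∧
       ∀ w : ∀ j : Fin q, Fin (a j + 1) → ℂ, (∀ j, w j ≠ 0) →
         tangent a w ≤
           (⨆ i, tangent a (p i)) ⊔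
             Submodule.span ℂ (Set.range fun m => fromCoords a (c m)) →
         ∃ (i : Fin k) (t : ℂ), tprod ℂ w = t • tprod ℂ (p i))

/-!
The dimension of a span of polynomially varying vectors is lower semicontinuous, so it suffices to
exhibit `k` points whose tangent spaces are independent, and lower bounds may be verified at special
points or in a limit.

Give each point a coordinate vector `e_m` as its last factor. The sum of the tangent spaces then
decomposes into slices indexed by `m`: the slice `m` is spanned by the tangent spaces, in one factor
less, at the points in the slot `m`, together with all the points. Hence `s` independent tangent
spaces in one factor less yield up to `s` points per slot, as long as the slices have room for them,
and the theorem follows by induction on the number of factors.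

For three factors the slices are matrices, and the tangent spaces of any two matrices `v ⊗ w` and
`v' ⊗ w'` meet, so more is needed. Replacing `e_m` by `e_m + ε i e_{m+1}` at the `i`-th point in the
slot `m` and letting `ε` tend to `0`, the difference of the two copies of a vector common to two
tangent spaces in the slot `m` survives in the slice `m + 1`. The dimension lost in the slot `m` is
thus recovered there by the mixed tensors `v ⊗ w'`.
-/

section Generic

variable {K σ E : Type*} [Field K] [AddCommGroup E] [Module K E]

/-- A map from the affine space `σ → K` to a vector space is polynomial if its composition with
every linear functional is. This avoids choosing a basis of the target. -/
def IsPolyMap (f : (σ → K) → E) : Prop :=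
  ∀ φ : E →ₗ[K] K, ∃ P : MvPolynomial σ K, ∀ x, φ (f x) = MvPolynomial.eval x P

/-- A property of points of the affine space `σ → K` holds generically if it holds off the zero
locus of a polynomial function which is not identically zero. -/
def Generically (Q : (σ → K) → Prop) : Prop :=
  ∃ F : MvPolynomial σ K, (∃ x, MvPolynomial.eval x F ≠ 0) ∧
    ∀ x, MvPolynomial.eval x F ≠ 0 → Q x

theorem Generically.exists {Q : (σ → K) → Prop} (h : Generically Q) : ∃ x, Q x := by
  obtain ⟨F, ⟨x, hx⟩, hF⟩ := h
  exact ⟨x, hF x hx⟩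

theorem Generically.mono {Q Q' : (σ → K) → Prop} (h : Generically Q) (hQ : ∀ x, Q x → Q' x) :
    Generically Q' := by
  obtain ⟨F, hne, hF⟩ := h
  exact ⟨F, hne, fun x hx => hQ x (hF x hx)⟩

theorem Generically.forall [Infinite K] {ι : Type*} [Finite ι] {Q : ι → (σ → K) → Prop}
    (h : ∀ i, Generically (Q i)) : Generically fun x => ∀ i, Q i x := by
  cases nonempty_fintype ι
  choose F hne hF using h
  have hprod : ∏ i, F i ≠ 0 := Finset.prod_ne_zero_iff.2 fun i _ hi => by
    obtain ⟨x, hx⟩ := hne i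
    exact hx (by rw [hi, map_zero])
  refine ⟨∏ i, F i, ?_, fun x hx i => hF i x ?_⟩
  · by_contra! hzero
    exact hprod (MvPolynomial.funext fun x => by rw [hzero x, map_zero])
  · rw [map_prod] at hx
    exact Finset.prod_ne_zero_iff.1 hx i (Finset.mem_univ i)

theorem Generically.and [Infinite K] {Q Q' : (σ → K) → Prop} (h : Generically Q)
    (h' : Generically Q') : Generically fun x => Q x ∧ Q' x :=
  (Generically.forall (Q := fun b : Bool => if b then Q else Q')
    (by rintro (_ | _) <;> assumption)).mono fun _ hx => ⟨hx true, hx false⟩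

theorem generically_eval_ne_zero {P : MvPolynomial σ K} (hP : ∃ x, MvPolynomial.eval x P ≠ 0) :
    Generically fun x => MvPolynomial.eval x P ≠ 0 :=
  ⟨P, hP, fun _ => id⟩

theorem isPolyMap_const (e : E) : IsPolyMap fun _ : σ → K => e :=
  fun φ => ⟨MvPolynomial.C (φ e), fun _ => (MvPolynomial.eval_C _).symm⟩

theorem isPolyMap_eval_smul (P : MvPolynomial σ K) (e : E) :
    IsPolyMap fun x => MvPolynomial.eval x P • e :=
  fun φ => ⟨P * MvPolynomial.C (φ e), fun x => by simp⟩

theorem IsPolyMap.add {f g : (σ → K) → E} (hf : IsPolyMap f) (hg : IsPolyMap g) :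
    IsPolyMap fun x => f x + g x := by
  intro φ
  obtain ⟨P, hP⟩ := hf φ
  obtain ⟨Q, hQ⟩ := hg φ
  exact ⟨P + Q, fun x => by rw [map_add, map_add, hP, hQ]⟩

theorem isPolyMap_apply (i : σ) : IsPolyMap fun x : σ → K => x i :=
  fun φ => ⟨MvPolynomial.X i * MvPolynomial.C (φ 1), fun x => by
    rw [map_mul, MvPolynomial.eval_X, MvPolynomial.eval_C, ← smul_eq_mul, ← map_smul, smul_eq_mul,
      mul_one]⟩

theorem isPolyMap_pi {ι : Type*} [Finite ι] {F : ι → Type*} [∀ i, AddCommGroup (F i)]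
    [∀ i, Module K (F i)] {f : (σ → K) → ∀ i, F i}
    (h : ∀ i, IsPolyMap fun x => f x i) : IsPolyMap f := by
  classical
  cases nonempty_fintype ι
  intro φ
  choose P hP using fun i => h i (φ ∘ₗ LinearMap.single K F i)
  refine ⟨∑ i, P i, fun x => ?_⟩
  conv_lhs => rw [← Finset.univ_sum_single (f x), map_sum]
  rw [map_sum]
  exact Finset.sum_congr rfl fun i _ => hP i x

theorem IsPolyMap.multilinearMap {ι : Type*} [Finite ι] {M : ι → Type*}
    [∀ i, AddCommGroup (M i)] [∀ i, Module K (M i)] [∀ i, FiniteDimensional K (M i)]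
    (f : MultilinearMap K M E) {v : (σ → K) → ∀ i, M i}
    (hv : ∀ i, IsPolyMap fun x => v x i) : IsPolyMap fun x => f (v x) := by
  classical
  cases nonempty_fintype ι
  intro φ
  let b := fun i => Module.finBasis K (M i)
  choose P hP using fun i r => hv i ((b i).coord r)
  refine ⟨∑ r : ∀ i, Fin (Module.finrank K (M i)),
    (∏ i, P i (r i)) * MvPolynomial.C (φ (f fun i => b i (r i))), fun x => ?_⟩
  have hexpand : v x = fun i => ∑ r, (b i).coord r (v x i) • b i r :=
    funext fun i => ((b i).sum_repr (v x i)).symm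
  conv_lhs => beta_reduce; rw [hexpand, f.map_sum]
  simp only [f.map_smul_univ, map_sum, map_smul, smul_eq_mul, map_mul, map_prod,
    MvPolynomial.eval_C, hP]

theorem generically_linearIndependent {ι : Type*} [Finite ι] {g : ι → (σ → K) → E}
    (hg : ∀ i, IsPolyMap (g i)) {x₀ : σ → K} (h : LinearIndependent K fun i => g i x₀) :
    Generically fun x => LinearIndependent K fun i => g i x := by
  classical
  cases nonempty_fintype ι
  -- A left inverse of the coordinate map at `x₀` yields a Gram-type determinant equal to `1` there.
  obtain ⟨φ, hφ⟩ := (Fintype.linearCombination K fun i => g i x₀).exists_leftInverse_of_injective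
    (LinearMap.ker_eq_bot.2 h.fintypeLinearCombination_injective)
  choose P hP using fun i j => hg i (LinearMap.proj j ∘ₗ φ)
  have heval (x : σ → K) : MvPolynomial.eval x (Matrix.det (Matrix.of P)) =
      Matrix.det (Matrix.of fun i j => φ (g i x) j) := by
    rw [RingHom.map_det]
    congr 1
    ext i j
    exact (hP i j x).symm
  have hone : (Matrix.of fun i j => φ (g i x₀) j) = (1 : Matrix ι ι K) := by
    ext i j
    have hi := congrFun (LinearMap.congr_fun hφ (Pi.single i 1)) j
    simp only [LinearMap.comp_apply, Fintype.linearCombination_apply_single, one_smul,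
      LinearMap.id_apply] at hi
    rw [Matrix.of_apply, hi, Matrix.one_apply, Pi.single_apply]
    simp only [eq_comm]
  refine (generically_eval_ne_zero (P := Matrix.det (Matrix.of P)) ⟨x₀, ?_⟩).mono fun x hx => ?_
  · rw [heval, hone, Matrix.det_one]
    exact one_ne_zero
  · rw [heval] at hx
    exact LinearIndependent.of_comp φ (Matrix.linearIndependent_rows_of_det_ne_zero hx)

theorem generically_le_finrank_span [FiniteDimensional K E] {ι : Type*} {g : ι → (σ → K) → E}
    (hg : ∀ i, IsPolyMap (g i)) {r : ℕ} {x₀ : σ → K}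
    (h : r ≤ Module.finrank K (Submodule.span K (Set.range fun i => g i x₀))) :
    Generically fun x => r ≤ Module.finrank K (Submodule.span K (Set.range fun i => g i x)) := by
  obtain ⟨f, hf, -, hli⟩ :=
    Submodule.exists_fun_fin_finrank_span_eq K (Set.range fun i => g i x₀)
  choose c hc using hf
  have hli₀ : LinearIndependent K fun i : Fin r => g (c (Fin.castLE h i)) x₀ := by
    simpa only [Function.comp_def, hc] using hli.comp _ (Fin.castLE_injective h)
  refine (generically_linearIndependent (fun i => hg (c (Fin.castLE h i))) hli₀).mono
    fun x hx => ?_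
  calc r = Module.finrank K
        (Submodule.span K (Set.range fun i : Fin r => g (c (Fin.castLE h i)) x)) := by
        rw [finrank_span_eq_card hx, Fintype.card_fin]
    _ ≤ _ := Submodule.finrank_mono (Submodule.span_mono (Set.range_comp_subset_range
        (fun i : Fin r => c (Fin.castLE h i)) fun i => g i x))

end Generic

section Dimension

variable {K E ι : Type*} [Field K] [AddCommGroup E] [Module K E] [FiniteDimensional K E]

theorem finrank_iSup_le_card_mul [Fintype ι] {T : ι → Submodule K E} {d : ℕ}
    (h : ∀ i, Module.finrank K (T i) ≤ d) :
    Module.finrank K ↥(⨆ i, T i) ≤ Fintype.card ι * d := by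
  classical
  suffices hs : ∀ s : Finset ι, Module.finrank K ↥(s.sup T) ≤ s.card * d by
    rw [← Finset.sup_univ_eq_iSup]
    exact hs Finset.univ
  intro s
  induction s using Finset.induction_on with
  | empty => rw [Finset.sup_empty, finrank_bot]; exact Nat.zero_le _
  | insert i s hi ih =>
    rw [Finset.sup_insert, Finset.card_insert_of_notMem hi]
    linarith [Submodule.finrank_add_le_finrank_add_finrank (T i) (s.sup T), h i]

theorem finrank_iSup_le_one_add_sum [Fintype ι] {T : ι → Submodule K E} {d : ι → ℕ} {t : E}
    (ht : t ≠ 0) (htT : ∀ i, t ∈ T i) (h : ∀ i, Module.finrank K (T i) ≤ d i + 1) :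
    Module.finrank K ↥(⨆ i, T i) ≤ 1 + ∑ i, d i := by
  classical
  suffices hs : ∀ s : Finset ι,
      Module.finrank K ↥(s.sup T ⊔ Submodule.span K {t}) ≤ 1 + ∑ i ∈ s, d i by
    rw [← Finset.sup_univ_eq_iSup]
    exact (Submodule.finrank_mono le_sup_left).trans (hs Finset.univ)
  intro s
  induction s using Finset.induction_on with
  | empty =>
    rw [Finset.sup_empty, bot_sup_eq, finrank_span_singleton ht]
    exact Nat.le_add_right 1 _
  | insert i s hi ih =>
    rw [Finset.sup_insert, sup_assoc, Finset.sum_insert hi]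
    set S := s.sup T ⊔ Submodule.span K {t}
    have hinf : 1 ≤ Module.finrank K ↥(T i ⊓ S) := by
      rw [← finrank_span_singleton (K := K) ht]
      exact Submodule.finrank_mono (le_inf
        ((Submodule.span_singleton_le_iff_mem _ _).2 (htT i)) le_sup_right)
    linarith [Submodule.finrank_sup_add_finrank_inf_eq (T i) S, h i]

theorem sum_finrank_le_of_map_le [Fintype ι] {F : Type*} [AddCommGroup F] [Module K F]
    [FiniteDimensional K F] {f : ι → E →ₗ[K] F}
    (hf : Function.Injective fun x : ι → E => ∑ i, f i (x i)) {R : ι → Submodule K E}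
    {S : Submodule K F} (h : ∀ i, (R i).map (f i) ≤ S) :
    ∑ i, Module.finrank K (R i) ≤ Module.finrank K S := by
  rw [← Module.finrank_pi_fintype]
  let g : (∀ i, R i) →ₗ[K] F := ∑ i, f i ∘ₗ (R i).subtype ∘ₗ LinearMap.proj i
  have hg (x : ∀ i, R i) : g x = ∑ i, f i (x i) := LinearMap.sum_apply _ _ _
  have hgS (x : ∀ i, R i) : g x ∈ S := by
    rw [hg]
    exact Submodule.sum_mem _ fun i _ => h i (Submodule.mem_map_of_mem (x i).2)
  refine LinearMap.finrank_le_finrank_of_injective (f := g.codRestrict S hgS) fun x y hxy => ?_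
  have hsum : ∑ i, f i (x i) = ∑ i, f i (y i) := by
    simpa only [LinearMap.codRestrict_apply, hg] using congrArg Subtype.val hxy
  exact funext fun i => Subtype.ext (congrFun (hf hsum) i)

theorem card_mul_le_finrank_iSup_comp {κ : Type*} [Fintype ι] [Fintype κ]
    {T : ι → Submodule K E} {d : ℕ} (h : ∀ i, Module.finrank K (T i) ≤ d)
    (hT : Fintype.card ι * d ≤ Module.finrank K ↥(⨆ i, T i)) (f : κ ↪ ι) :
    Fintype.card κ * d ≤ Module.finrank K ↥(⨆ j, T (f j)) := by
  classical
  have hrest := finrank_iSup_le_card_mul fun i : {i // i ∉ Set.range f} => h i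
  have hcover : (⨆ i, T i) ≤ (⨆ j, T (f j)) ⊔ ⨆ i : {i // i ∉ Set.range f}, T i := by
    refine iSup_le fun i => ?_
    by_cases hi : i ∈ Set.range f
    · obtain ⟨j, rfl⟩ := hi
      exact le_sup_of_le_left (le_iSup (fun j => T (f j)) j)
    · exact le_sup_of_le_right (le_iSup (fun i : {i // i ∉ Set.range f} => T i) ⟨i, hi⟩)
  have hle := (Submodule.finrank_mono hcover).trans
    (Submodule.finrank_add_le_finrank_add_finrank _ _)
  have hcard : Fintype.card ι = Fintype.card κ + Fintype.card {i // i ∉ Set.range f} := by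
    rw [Fintype.card_congr (Equiv.ofInjective f f.injective), ← Fintype.card_sum]
    exact (Fintype.card_congr (Equiv.sumCompl (· ∈ Set.range f))).symm
  rw [hcard] at hT
  linarith

theorem exists_min_le_finrank_sup_span_range_fin {P : Type*} [Nonempty P] {t : P → E}
    (ht : Submodule.span K (Set.range t) = ⊤) (L : Submodule K E) (m : ℕ) :
    ∃ x : Fin m → P, min (Module.finrank K L + m) (Module.finrank K E) ≤
      Module.finrank K ↥(L ⊔ Submodule.span K (Set.range (t ∘ x))) := by
  induction m with
  | zero => exact ⟨Fin.elim0, (min_le_left _ _).trans (Submodule.finrank_mono le_sup_left)⟩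
  | succ m ih =>
    obtain ⟨x, hx⟩ := ih
    set L' := L ⊔ Submodule.span K (Set.range (t ∘ x))
    have hcons (p : P) : L ⊔ Submodule.span K (Set.range (t ∘ Fin.cons (α := fun _ => P) p x)) =
        Submodule.span K {t p} ⊔ L' := by
      rw [Fin.comp_cons, Fin.range_cons, Submodule.span_insert, sup_left_comm]
    by_cases hfull : L' = ⊤
    · refine ⟨Fin.cons (Classical.arbitrary P) x, (min_le_right _ _).trans ?_⟩
      rw [hcons, hfull, sup_top_eq, finrank_top]
    · obtain ⟨p, hp⟩ : ∃ p, t p ∉ L' := by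
        by_contra! hall
        exact hfull (top_le_iff.1 (ht ▸ Submodule.span_le.2 (Set.range_subset_iff.2 hall)))
      have hlt : L' < Submodule.span K {t p} ⊔ L' :=
        right_lt_sup.2 fun h => hp ((Submodule.span_singleton_le_iff_mem _ _).1 h)
      refine ⟨Fin.cons p x, ?_⟩
      rw [hcons]
      have := Submodule.finrank_lt_finrank_of_lt hlt
      omega

theorem exists_min_le_finrank_sup_span_range {P : Type*} [Nonempty P] {t : P → E}
    (ht : Submodule.span K (Set.range t) = ⊤) (L : Submodule K E) (ι : Type*) [Fintype ι] :
    ∃ x : ι → P, min (Module.finrank K L + Fintype.card ι) (Module.finrank K E) ≤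
      Module.finrank K ↥(L ⊔ Submodule.span K (Set.range (t ∘ x))) := by
  obtain ⟨x, hx⟩ := exists_min_le_finrank_sup_span_range_fin ht L (Fintype.card ι)
  refine ⟨x ∘ Fintype.equivFin ι, ?_⟩
  rwa [← Function.comp_assoc, (Fintype.equivFin ι).surjective.range_comp]

end Dimension

section Segre

variable {q : ℕ} {a : Fin q → ℕ} {κ σ : Type*}

theorem finrank_ten (a : Fin q → ℕ) : Module.finrank ℂ (Ten q a) = ∏ j, (a j + 1) := by
  rw [Module.finrank_eq_card_basis (Basis.piTensorProduct fun j => Pi.basisFun ℂ (Fin (a j + 1))),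
    Fintype.card_pi]
  simp only [Fintype.card_fin]

theorem linearIndependent_basisVec (a : Fin q → ℕ) : LinearIndependent ℂ (basisVec a) := by
  have h := (Basis.piTensorProduct fun j => Pi.basisFun ℂ (Fin (a j + 1))).linearIndependent
  have hb : ⇑(Basis.piTensorProduct fun j => Pi.basisFun ℂ (Fin (a j + 1))) = basisVec a := by
    funext f
    simp only [basisVec, Basis.piTensorProduct_apply, Pi.basisFun_apply]
  rwa [hb] at h

theorem tprod_ne_zero {v : ∀ j, Fin (a j + 1) → ℂ} (hv : ∀ j, v j ≠ 0) : tprod ℂ v ≠ 0 := by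
  choose y hy using fun j => Function.ne_iff.1 (hv j)
  intro h
  have hrepr := Basis.piTensorProduct_repr_tprod_apply
    (fun j => Pi.basisFun ℂ (Fin (a j + 1))) v y
  rw [h, map_zero, Finsupp.zero_apply] at hrepr
  exact Finset.prod_ne_zero_iff.2 (fun j _ => hy j) hrepr.symm

theorem tprod_update_mem_tangent (v : ∀ j, Fin (a j + 1) → ℂ) (j : Fin q)
    (u : Fin (a j + 1) → ℂ) : tprod ℂ (Function.update v j u) ∈ tangent a v :=
  Submodule.subset_span ⟨j, u, rfl⟩

theorem card_le_finrank_of_basisVec_mem {S : Submodule ℂ (Ten q a)}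
    {τ : Type*} {f : τ → ∀ j, Fin (a j + 1)} (hf : Function.Injective f) {U : Finset τ}
    (hU : ∀ z ∈ U, basisVec a (f z) ∈ S) : U.card ≤ Module.finrank ℂ S := by
  have hli : LinearIndependent ℂ fun z : U => (⟨_, hU z z.2⟩ : S) :=
    LinearIndependent.of_comp S.subtype
      ((linearIndependent_basisVec a).comp _ (hf.comp Subtype.val_injective))
  simpa only [Fintype.card_coe] using hli.fintype_card_le_finrank

theorem tprod_update_single (g : ∀ j, Fin (a j + 1)) (j : Fin q)
    (y : Fin (a j + 1)) :
    tprod ℂ (Function.update (fun j => (Pi.single (g j) 1 : Fin (a j + 1) → ℂ)) j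
      (Pi.single y 1)) = basisVec a (Function.update g j y) := by
  refine congrArg (PiTensorProduct.tprod ℂ) (funext fun k => ?_)
  exact (Function.apply_update (fun _ z => (Pi.single z 1 : Fin _ → ℂ)) g j y k).symm

theorem basisVec_update_mem_tangent (g : ∀ j, Fin (a j + 1)) (j : Fin q)
    (y : Fin (a j + 1)) :
    basisVec a (Function.update g j y) ∈ tangent a fun j => Pi.single (g j) 1 := by
  rw [← tprod_update_single]
  exact tprod_update_mem_tangent _ _ _

theorem tangent_eq_iSup_range (v : ∀ j, Fin (a j + 1) → ℂ) :
    tangent a v = ⨆ j, LinearMap.range ((PiTensorProduct.tprod ℂ).toLinearMap v j) := by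
  refine le_antisymm (Submodule.span_le.2 ?_) (iSup_le fun j => ?_)
  · rintro _ ⟨j, u, rfl⟩
    exact Submodule.mem_iSup_of_mem j ⟨u, rfl⟩
  · rintro _ ⟨u, rfl⟩
    exact tprod_update_mem_tangent v j u

theorem tangent_le_range_of_eq_zero {v : ∀ j, Fin (a j + 1) → ℂ} {j : Fin q} (hj : v j = 0) :
    tangent a v ≤ LinearMap.range ((PiTensorProduct.tprod ℂ).toLinearMap v j) := by
  refine Submodule.span_le.2 ?_
  rintro _ ⟨i, u, rfl⟩
  rcases eq_or_ne i j with rfl | hij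
  · exact ⟨u, rfl⟩
  · rw [(PiTensorProduct.tprod ℂ).map_coord_zero j (by rw [Function.update_of_ne hij.symm, hj])]
    exact Submodule.zero_mem _

theorem finrank_tangent_le (v : ∀ j, Fin (a j + 1) → ℂ) :
    Module.finrank ℂ (tangent a v) ≤ 1 + ∑ j, a j := by
  have hrange (j : Fin q) :
      Module.finrank ℂ (LinearMap.range ((PiTensorProduct.tprod ℂ).toLinearMap v j)) ≤ a j + 1 :=
    (LinearMap.finrank_range_le _).trans_eq (Module.finrank_fin_fun ℂ)
  by_cases hv : ∀ j, v j ≠ 0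
  · rw [tangent_eq_iSup_range]
    exact finrank_iSup_le_one_add_sum (tprod_ne_zero hv)
      (fun j => ⟨v j, by rw [MultilinearMap.toLinearMap_apply, Function.update_eq_self]⟩) hrange
  · push Not at hv
    obtain ⟨j, hj⟩ := hv
    calc Module.finrank ℂ (tangent a v)
        ≤ Module.finrank ℂ (LinearMap.range ((PiTensorProduct.tprod ℂ).toLinearMap v j)) :=
          Submodule.finrank_mono (tangent_le_range_of_eq_zero hj)
      _ ≤ a j + 1 := hrange j
      _ ≤ 1 + ∑ j, a j := by
          rw [add_comm]
          gcongr
          exact Finset.single_le_sum (fun _ _ => Nat.zero_le _) (Finset.mem_univ j)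

theorem iSup_tangent_eq_span_range (p : κ → ∀ j, Fin (a j + 1) → ℂ) :
    ⨆ i, tangent a (p i) = Submodule.span ℂ (Set.range
      fun z : κ × Σ j, (Fin (a j + 1) → ℂ) =>
        tprod ℂ (Function.update (p z.1) z.2.1 z.2.2)) := by
  refine le_antisymm (iSup_le fun i => Submodule.span_le.2 ?_) (Submodule.span_le.2 ?_)
  · rintro _ ⟨j, u, rfl⟩
    exact Submodule.subset_span ⟨(i, ⟨j, u⟩), rfl⟩
  · rintro _ ⟨⟨i, j, u⟩, rfl⟩
    exact Submodule.mem_iSup_of_mem i (tprod_update_mem_tangent _ _ _)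

theorem isPolyMap_tprod {v : (σ → ℂ) → ∀ j, Fin (a j + 1) → ℂ}
    (hv : ∀ j, IsPolyMap fun x => v x j) : IsPolyMap fun x => tprod ℂ (v x) :=
  IsPolyMap.multilinearMap _ hv

theorem isPolyMap_tprod_update {v : (σ → ℂ) → ∀ j, Fin (a j + 1) → ℂ}
    (hv : ∀ j, IsPolyMap fun x => v x j) {i : Fin q} {u : (σ → ℂ) → Fin (a i + 1) → ℂ}
    (hu : IsPolyMap u) : IsPolyMap fun x => tprod ℂ (Function.update (v x) i (u x)) :=
  isPolyMap_tprod fun j => by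
    rcases eq_or_ne j i with rfl | hj
    · simpa only [Function.update_self] using hu
    · simpa only [Function.update_of_ne hj] using hv j

theorem generically_le_finrank_iSup_tangent_sup_span {ι : Type*}
    {p : (σ → ℂ) → κ → ∀ j, Fin (a j + 1) → ℂ} (hp : ∀ i j, IsPolyMap fun x => p x i j)
    {t : (σ → ℂ) → ι → Ten q a} (ht : ∀ i, IsPolyMap fun x => t x i) {r : ℕ} {x₀ : σ → ℂ}
    (h : r ≤ Module.finrank ℂ
      ↥((⨆ i, tangent a (p x₀ i)) ⊔ Submodule.span ℂ (Set.range (t x₀)))) :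
    Generically fun x => r ≤ Module.finrank ℂ
      ↥((⨆ i, tangent a (p x i)) ⊔ Submodule.span ℂ (Set.range (t x))) := by
  let g (x : σ → ℂ) : (κ × Σ j, (Fin (a j + 1) → ℂ)) ⊕ ι → Ten q a :=
    Sum.elim (fun z => tprod ℂ (Function.update (p x z.1) z.2.1 z.2.2)) (t x)
  have hspan (x : σ → ℂ) : (⨆ i, tangent a (p x i)) ⊔ Submodule.span ℂ (Set.range (t x)) =
      Submodule.span ℂ (Set.range (g x)) := by
    rw [iSup_tangent_eq_span_range, ← Submodule.span_union, ← Set.Sum.elim_range]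
  have hg : ∀ z, IsPolyMap fun x => g x z := by
    rintro (⟨i, j, u⟩ | i)
    · exact isPolyMap_tprod_update (hp i) (isPolyMap_const u)
    · exact ht i
  rw [hspan] at h
  exact (generically_le_finrank_span hg h).mono fun x hx => by rwa [hspan]

theorem generically_le_finrank_iSup_tangent_sup {p : (σ → ℂ) → κ → ∀ j, Fin (a j + 1) → ℂ}
    (hp : ∀ i j, IsPolyMap fun x => p x i j) (C : Submodule ℂ (Ten q a)) {r : ℕ} {x₀ : σ → ℂ}
    (h : r ≤ Module.finrank ℂ ↥((⨆ i, tangent a (p x₀ i)) ⊔ C)) :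
    Generically fun x => r ≤ Module.finrank ℂ ↥((⨆ i, tangent a (p x i)) ⊔ C) := by
  have hC : Submodule.span ℂ (Set.range ((↑) : C → Ten q a)) = C := by
    rw [Subtype.range_coe, Submodule.span_eq]
  have hgen := generically_le_finrank_iSup_tangent_sup_span (κ := κ) (r := r) (x₀ := x₀) hp
    (t := fun _ => ((↑) : C → Ten q a)) fun x => isPolyMap_const (x : Ten q a)
  rw [hC] at hgen
  exact hgen h

/-- The tuple of points with the given coordinates. -/
def points (x : κ × (Σ j, Fin (a j + 1)) → ℂ) : κ → ∀ j, Fin (a j + 1) → ℂ :=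
  fun i j y => x (i, ⟨j, y⟩)

theorem isPolyMap_points (i : κ) (j : Fin q) :
    IsPolyMap fun x : κ × (Σ j, Fin (a j + 1)) → ℂ => points x i j :=
  isPolyMap_pi fun _ => isPolyMap_apply _

/-- The tangent spaces at the given points of the Segre variety are independent and of the maximal
dimension `1 + ∑ aⱼ`. By `finrank_tangent_le`, this is a lower bound for the dimension of
their sum. -/
def TangentsIndependent [Fintype κ] (a : Fin q → ℕ) (p : κ → ∀ j, Fin (a j + 1) → ℂ) : Prop :=
  Fintype.card κ * (1 + ∑ j, a j) ≤ Module.finrank ℂ ↥(⨆ i, tangent a (p i))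

theorem TangentsIndependent.finrank_eq [Fintype κ] {p : κ → ∀ j, Fin (a j + 1) → ℂ}
    (h : TangentsIndependent a p) :
    Module.finrank ℂ ↥(⨆ i, tangent a (p i)) = Fintype.card κ * (1 + ∑ j, a j) :=
  (finrank_iSup_le_card_mul fun i => finrank_tangent_le (p i)).antisymm h

theorem TangentsIndependent.comp [Fintype κ] {ι : Type*} [Fintype ι]
    {p : κ → ∀ j, Fin (a j + 1) → ℂ} (h : TangentsIndependent a p) (f : ι ↪ κ) :
    TangentsIndependent a (p ∘ f) :=
  card_mul_le_finrank_iSup_comp (fun i => finrank_tangent_le (p i)) h f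

theorem TangentsIndependent.generically [Fintype κ] {p : κ → ∀ j, Fin (a j + 1) → ℂ}
    (h : TangentsIndependent a p) :
    Generically fun x : κ × (Σ j, Fin (a j + 1)) → ℂ => TangentsIndependent a (points x) := by
  have h₀ : Fintype.card κ * (1 + ∑ j, a j) ≤
      Module.finrank ℂ ↥((⨆ i, tangent a (p i)) ⊔ (⊥ : Submodule ℂ (Ten q a))) := by
    rwa [sup_bot_eq]
  refine (generically_le_finrank_iSup_tangent_sup isPolyMap_points ⊥
    (x₀ := fun z => p z.1 z.2.1 z.2.2) h₀).mono fun x hx => ?_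
  rwa [sup_bot_eq] at hx

/-- Some `k` tangent spaces to the Segre variety of `ℙ^{a₁} × ⋯ × ℙ^{a_q}` are independent; by
Terracini's lemma, its `k`-th secant variety then has the expected dimension. -/
def Nondefective (a : Fin q → ℕ) (k : ℕ) : Prop :=
  ∃ p : Fin k → ∀ j, Fin (a j + 1) → ℂ, TangentsIndependent a p

theorem TangentsIndependent.nondefective [Fintype κ] {p : κ → ∀ j, Fin (a j + 1) → ℂ}
    (h : TangentsIndependent a p) {k : ℕ} (hk : k ≤ Fintype.card κ) : Nondefective a k := by
  obtain ⟨f⟩ := Function.Embedding.nonempty_of_card_le (α := Fin k) (β := κ) (by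
    rwa [Fintype.card_fin])
  exact ⟨p ∘ f, h.comp f⟩

theorem Nondefective.exists_of_card_le {k : ℕ} (h : Nondefective a k) [Fintype κ]
    (hκ : Fintype.card κ ≤ k) : ∃ p : κ → ∀ j, Fin (a j + 1) → ℂ, TangentsIndependent a p := by
  obtain ⟨p, hp⟩ := h
  obtain ⟨f⟩ := Function.Embedding.nonempty_of_card_le (α := κ) (β := Fin k) (by
    rwa [Fintype.card_fin])
  exact ⟨p ∘ f, hp.comp f⟩

theorem Nondefective.exists_evalW {k : ℕ} (h : Nondefective a k) :
    ∃ F : MvPolynomial (WIdx q a k) ℂ, (∃ p, evalW F p ≠ 0) ∧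
      ∀ p : Fin k → ∀ j, Fin (a j + 1) → ℂ, evalW F p ≠ 0 →
        Module.finrank ℂ ↥(⨆ i, tangent a (p i)) = k * (1 + ∑ j, a j) := by
  obtain ⟨p, hp⟩ := h
  obtain ⟨F, ⟨x, hx⟩, hF⟩ := hp.generically
  refine ⟨F, ⟨points x, hx⟩, fun p hFp => ?_⟩
  have hp : TangentsIndependent a p := hF (fun z => p z.1 z.2.1 z.2.2) hFp
  rw [hp.finrank_eq, Fintype.card_fin]

end Segre

section Slices

variable {q : ℕ} {a : Fin (q + 1) → ℕ} {κ : Type*}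

/-- The tuple of factor vectors `v` followed by a last factor `z`. -/
def appendFactor (v : ∀ j : Fin q, Fin (a j.castSucc + 1) → ℂ)
    (z : Fin (a (Fin.last q) + 1) → ℂ) : ∀ j, Fin (a j + 1) → ℂ :=
  Fin.snoc (α := fun j => Fin (a j + 1) → ℂ) v z

theorem update_appendFactor_castSucc (v : ∀ j : Fin q, Fin (a j.castSucc + 1) → ℂ)
    (z : Fin (a (Fin.last q) + 1) → ℂ) (j : Fin q) (u : Fin (a j.castSucc + 1) → ℂ) :
    Function.update (appendFactor v z) j.castSucc u = appendFactor (Function.update v j u) z :=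
  (Fin.snoc_update (α := fun j => Fin (a j + 1) → ℂ) z v j u).symm

theorem update_appendFactor_last (v : ∀ j : Fin q, Fin (a j.castSucc + 1) → ℂ)
    (z u : Fin (a (Fin.last q) + 1) → ℂ) :
    Function.update (appendFactor v z) (Fin.last q) u = appendFactor v u :=
  Fin.update_snoc_last (α := fun j => Fin (a j + 1) → ℂ) z v u

theorem isPolyMap_appendFactor {σ : Type*}
    {v : (σ → ℂ) → ∀ j : Fin q, Fin (a j.castSucc + 1) → ℂ} (hv : ∀ j, IsPolyMap fun x => v x j)
    {z : (σ → ℂ) → Fin (a (Fin.last q) + 1) → ℂ} (hz : IsPolyMap z) (j : Fin (q + 1)) :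
    IsPolyMap fun x => appendFactor (v x) (z x) j := by
  induction j using Fin.lastCases with
  | last => simpa only [appendFactor, Fin.snoc_last] using hz
  | cast j => simpa only [appendFactor, Fin.snoc_castSucc] using hv j

/-- The linear map `x ↦ x ⊗ z`. -/
def appendVec :
    (Fin (a (Fin.last q) + 1) → ℂ) →ₗ[ℂ] Ten q (fun j => a j.castSucc) →ₗ[ℂ] Ten (q + 1) a :=
  (PiTensorProduct.lift
    (PiTensorProduct.tprod ℂ (s := fun j => Fin (a j + 1) → ℂ)).curryRight).flip

theorem appendVec_tprod (z : Fin (a (Fin.last q) + 1) → ℂ)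
    (v : ∀ j : Fin q, Fin (a j.castSucc + 1) → ℂ) :
    appendVec z (tprod ℂ v) = tprod ℂ (appendFactor v z) := by
  rw [appendVec, LinearMap.flip_apply, PiTensorProduct.lift.tprod]
  rfl

theorem appendVec_tprod_mem_tangent (v : ∀ j : Fin q, Fin (a j.castSucc + 1) → ℂ)
    (z u : Fin (a (Fin.last q) + 1) → ℂ) :
    appendVec u (tprod ℂ v) ∈ tangent a (appendFactor v z) := by
  rw [appendVec_tprod, ← update_appendFactor_last v z u]
  exact tprod_update_mem_tangent _ _ _

theorem map_appendVec_tangent_le (v : ∀ j : Fin q, Fin (a j.castSucc + 1) → ℂ)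
    (z : Fin (a (Fin.last q) + 1) → ℂ) :
    (tangent (fun j => a j.castSucc) v).map (appendVec z) ≤ tangent a (appendFactor v z) := by
  refine Submodule.map_le_iff_le_comap.2 (Submodule.span_le.2 ?_)
  rintro _ ⟨j, u, rfl⟩
  change appendVec z _ ∈ tangent a (appendFactor v z)
  rw [appendVec_tprod, ← update_appendFactor_castSucc]
  exact tprod_update_mem_tangent _ _ _

theorem iSup_range_appendVec_single :
    ⨆ l, LinearMap.range (appendVec (a := a) (Pi.single l 1)) = ⊤ := by
  rw [eq_top_iff, ← PiTensorProduct.span_tprod_eq_top, Submodule.span_le]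
  rintro _ ⟨v, rfl⟩
  have hv : appendFactor (Fin.init v) (v (Fin.last q)) = v := Fin.snoc_init_self v
  rw [← hv, ← appendVec_tprod, pi_eq_sum_univ' (v (Fin.last q)), map_sum, LinearMap.sum_apply]
  refine Submodule.sum_mem _ fun l _ => ?_
  rw [map_smul, LinearMap.smul_apply]
  exact Submodule.smul_mem _ _ (Submodule.mem_iSup_of_mem l (LinearMap.mem_range_self _ _))

theorem injective_sum_appendVec_single :
    Function.Injective fun x : Fin (a (Fin.last q) + 1) → Ten q (fun j => a j.castSucc) =>
      ∑ l, appendVec (Pi.single l 1) (x l) := by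
  let f : (Fin (a (Fin.last q) + 1) → Ten q (fun j => a j.castSucc)) →ₗ[ℂ] Ten (q + 1) a :=
    ∑ l, appendVec (Pi.single l 1) ∘ₗ LinearMap.proj l
  have hf_apply (x) : f x = ∑ l, appendVec (Pi.single l 1) (x l) := LinearMap.sum_apply _ _ _
  have hdim : Module.finrank ℂ (Fin (a (Fin.last q) + 1) → Ten q (fun j => a j.castSucc)) =
      Module.finrank ℂ (Ten (q + 1) a) := by
    rw [Module.finrank_pi_fintype, finrank_ten, finrank_ten, Fin.prod_univ_castSucc,
      Finset.sum_const, Finset.card_univ, Fintype.card_fin, smul_eq_mul, mul_comm]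
  have hf : Function.Surjective f := by
    rw [← LinearMap.range_eq_top, eq_top_iff, ← iSup_range_appendVec_single]
    refine iSup_le fun l => ?_
    rintro _ ⟨x, rfl⟩
    refine ⟨Pi.single l x, ?_⟩
    rw [hf_apply, Finset.sum_eq_single l, Pi.single_eq_same]
    · exact fun l' _ hl' => by rw [Pi.single_eq_of_ne hl', map_zero]
    · exact fun hl => absurd (Finset.mem_univ l) hl
  have hinj := (LinearMap.injective_iff_surjective_of_finrank_eq_finrank hdim).2 hf
  rwa [show ⇑f = _ from funext hf_apply] at hinj

theorem sum_finrank_le_of_map_appendVec_le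
    {R : Fin (a (Fin.last q) + 1) → Submodule ℂ (Ten q fun j => a j.castSucc)}
    {S : Submodule ℂ (Ten (q + 1) a)} (h : ∀ l, (R l).map (appendVec (Pi.single l 1)) ≤ S) :
    ∑ l, Module.finrank ℂ (R l) ≤ Module.finrank ℂ S :=
  sum_finrank_le_of_map_le injective_sum_appendVec_single h

end Slices

section SlotSpan

variable {q s : ℕ} {κ M : Type*}

/-- If the points `p i` are distributed over slots by `c`, the span of the tangent spaces at the
points in the slot `m` and of all the points. It is the slice in the direction of `e_m` of the sum
of the tangent spaces at the points `p i ⊗ e_{c i}`. -/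
def slotSpan {a : Fin q → ℕ} (c : κ → M) (p : κ → ∀ j, Fin (a j + 1) → ℂ) (m : M) :
    Submodule ℂ (Ten q a) :=
  (⨆ i : {i // c i = m}, tangent a (p i)) ⊔ Submodule.span ℂ (Set.range fun i => tprod ℂ (p i))

theorem map_appendVec_slotSpan_le {a : Fin (q + 1) → ℕ} (c : κ → Fin (a (Fin.last q) + 1))
    (p : κ → ∀ j : Fin q, Fin (a j.castSucc + 1) → ℂ) (m : Fin (a (Fin.last q) + 1)) :
    (slotSpan c p m).map (appendVec (Pi.single m 1)) ≤
      ⨆ i, tangent a (appendFactor (p i) (Pi.single (c i) 1)) := by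
  rw [slotSpan, Submodule.map_sup, Submodule.map_iSup]
  refine sup_le (iSup_le ?_) (Submodule.map_le_iff_le_comap.2 (Submodule.span_le.2 ?_))
  · rintro ⟨i, rfl⟩
    exact (map_appendVec_tangent_le _ _).trans
      (le_iSup (fun i => tangent a (appendFactor (p i) (Pi.single (c i) 1))) i)
  · rintro _ ⟨i, rfl⟩
    exact Submodule.mem_iSup_of_mem i (appendVec_tprod_mem_tangent _ _ _)

variable {a : Fin q → ℕ} [Fintype κ] [DecidableEq M]

theorem Nondefective.exists_le_finrank_slotSpan (h : Nondefective a s) {c : κ → M} {m : M}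
    (hc : Fintype.card {i // c i = m} ≤ s)
    (hdim : s * ∑ j, a j + Fintype.card κ ≤ ∏ j, (a j + 1)) :
    ∃ p : κ → ∀ j, Fin (a j + 1) → ℂ,
      Fintype.card {i // c i = m} * ∑ j, a j + Fintype.card κ ≤
        Module.finrank ℂ (slotSpan c p m) := by
  obtain ⟨p₀, hp₀⟩ := h.exists_of_card_le hc
  obtain ⟨y, hy⟩ := exists_min_le_finrank_sup_span_range
    (PiTensorProduct.span_tprod_eq_top (R := ℂ) (s := fun j => Fin (a j + 1) → ℂ))
    (⨆ i, tangent a (p₀ i)) {i // ¬c i = m}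
  let p : κ → ∀ j, Fin (a j + 1) → ℂ := fun i =>
    if hi : c i = m then p₀ ⟨i, hi⟩ else y ⟨i, hi⟩
  have hle : (⨆ i, tangent a (p₀ i)) ⊔ Submodule.span ℂ (Set.range (tprod ℂ ∘ y)) ≤
      slotSpan c p m := by
    refine sup_le_sup (iSup_mono fun i => ?_) (Submodule.span_mono ?_)
    · rw [show p i = p₀ i from dif_pos i.2]
    · rintro _ ⟨i, rfl⟩
      exact ⟨i, congrArg _ (dif_neg i.2)⟩
  have hcard : Fintype.card κ = Fintype.card {i // c i = m} + Fintype.card {i // ¬c i = m} := by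
    rw [← Fintype.card_sum]
    exact (Fintype.card_congr (Equiv.sumCompl (c · = m))).symm
  refine ⟨p, le_trans (le_min ?_ ?_) (hy.trans (Submodule.finrank_mono hle))⟩
  · rw [hp₀.finrank_eq, hcard]
    exact le_of_eq (by ring)
  · rw [finrank_ten]
    exact le_trans (by gcongr) hdim

theorem Nondefective.generically_slotSpan (h : Nondefective a s) {c : κ → M} {m : M}
    (hc : Fintype.card {i // c i = m} ≤ s)
    (hdim : s * ∑ j, a j + Fintype.card κ ≤ ∏ j, (a j + 1)) :
    Generically fun x : κ × (Σ j, Fin (a j + 1)) → ℂ =>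
      Fintype.card {i // c i = m} * ∑ j, a j + Fintype.card κ ≤
        Module.finrank ℂ (slotSpan c (points x) m) := by
  obtain ⟨p, hp⟩ := h.exists_le_finrank_slotSpan hc hdim
  exact generically_le_finrank_iSup_tangent_sup_span (x₀ := fun z => p z.1 z.2.1 z.2.2)
    (p := fun (x : κ × (Σ j, Fin (a j + 1)) → ℂ) (i : {i // c i = m}) => points x i)
    (t := fun x i => tprod ℂ (points x i))
    (fun i => isPolyMap_points i.1) (fun i => isPolyMap_tprod (isPolyMap_points i)) hp

theorem card_fiber_le {ι : Type*} [Fintype ι] (f : κ ↪ M × ι) (m : M) :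
    Fintype.card {i // (f i).1 = m} ≤ Fintype.card ι :=
  Fintype.card_le_of_injective (fun i => (f i).2) fun i i' hii =>
    Subtype.ext (f.injective (Prod.ext (i.2.trans i'.2.symm) hii))

theorem Nondefective.succ {a : Fin (q + 1) → ℕ} {k : ℕ}
    (h : Nondefective (fun j => a j.castSucc) s) (hk : k ≤ (a (Fin.last q) + 1) * s)
    (hdim : s * ∑ j : Fin q, a j.castSucc + k ≤ ∏ j : Fin q, (a j.castSucc + 1)) :
    Nondefective a k := by
  obtain ⟨f⟩ := Function.Embedding.nonempty_of_card_le
    (α := Fin k) (β := Fin (a (Fin.last q) + 1) × Fin s) (by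
      rwa [Fintype.card_prod, Fintype.card_fin, Fintype.card_fin, Fintype.card_fin])
  let c (i : Fin k) := (f i).1
  have hc (m) : Fintype.card {i // c i = m} ≤ s := (card_fiber_le f m).trans_eq (Fintype.card_fin s)
  obtain ⟨x, hx⟩ := (Generically.forall fun m => h.generically_slotSpan (c := c) (hc m)
    (by rwa [Fintype.card_fin])).exists
  refine ⟨fun i => appendFactor (points x i) (Pi.single (c i) 1), le_trans (le_of_eq ?_)
    ((Finset.sum_le_sum fun m _ => hx m).trans
      (sum_finrank_le_of_map_appendVec_le (map_appendVec_slotSpan_le c (points x))))⟩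
  have hsum : ∑ m, Fintype.card {i // c i = m} = k := by
    rw [← Fintype.card_sigma, Fintype.card_congr (Equiv.sigmaFiberEquiv c), Fintype.card_fin]
  rw [Finset.sum_add_distrib, ← Finset.sum_mul, hsum, Fin.sum_univ_castSucc, Finset.sum_const,
    Finset.card_univ, Fintype.card_fin, Fintype.card_fin, smul_eq_mul]
  ring

end SlotSpan

section Degeneration

/-- The span of the pairwise intersections of the tangent spaces at the given points. -/
def tangentOverlap {q : ℕ} {a : Fin q → ℕ} {ι : Type*} (p : ι → ∀ j, Fin (a j + 1) → ℂ) :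
    Submodule ℂ (Ten q a) :=
  ⨆ (i) (j) (_ : i ≠ j), tangent a (p i) ⊓ tangent a (p j)

/-- The vector `e_m + ε i e_{m+1}` attached to the `i`-th point in the slot `m`, with indices `m`
taken cyclically. -/
def degenerateVec {n s : ℕ} (ε : ℂ) (c : Fin (n + 1) × Fin s) : Fin (n + 1) → ℂ :=
  Pi.single c.1 1 + (ε * (c.2 : ℕ)) • Pi.single (c.1 + 1) 1

theorem degenerateVec_zero {n s : ℕ} (c : Fin (n + 1) × Fin s) :
    degenerateVec 0 c = Pi.single c.1 1 := by
  rw [degenerateVec, zero_mul, zero_smul, add_zero]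

theorem degenerateVec_sub_degenerateVec {n s : ℕ} (ε : ℂ) (m : Fin (n + 1)) (i j : Fin s) :
    degenerateVec ε (m, i) - degenerateVec ε (m, j) =
      (ε * ((i : ℕ) - (j : ℕ) : ℂ)) • Pi.single (m + 1) 1 := by
  rw [degenerateVec, degenerateVec]
  module

theorem isPolyMap_degenerateVec {n s : ℕ} (c : Fin (n + 1) × Fin s) :
    IsPolyMap fun ε : Unit → ℂ => degenerateVec (ε ()) c := by
  have h := isPolyMap_eval_smul (MvPolynomial.X () * MvPolynomial.C ((c.2 : ℕ) : ℂ))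
    (Pi.single (c.1 + 1) 1 : Fin (n + 1) → ℂ)
  simp only [map_mul, MvPolynomial.eval_X, MvPolynomial.eval_C] at h
  exact (isPolyMap_const _).add h

variable {q s : ℕ} {a : Fin (q + 1) → ℕ}

theorem appendVec_sub_mem_tangent_sup {v w : ∀ j : Fin q, Fin (a j.castSucc + 1) → ℂ}
    {x : Ten q fun j => a j.castSucc} (hv : x ∈ tangent _ v) (hw : x ∈ tangent _ w)
    (y z : Fin (a (Fin.last q) + 1) → ℂ) :
    appendVec (y - z) x ∈ tangent a (appendFactor v y) ⊔ tangent a (appendFactor w z) := by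
  rw [map_sub, LinearMap.sub_apply]
  exact Submodule.sub_mem _
    (Submodule.mem_sup_left (map_appendVec_tangent_le v y (Submodule.mem_map_of_mem hv)))
    (Submodule.mem_sup_right (map_appendVec_tangent_le w z (Submodule.mem_map_of_mem hw)))

variable (p : Fin (a (Fin.last q) + 1) × Fin s → ∀ j : Fin q, Fin (a j.castSucc + 1) → ℂ)

theorem map_appendVec_tangentOverlap_le {ε : ℂ} (hε : ε ≠ 0) (m : Fin (a (Fin.last q) + 1)) :
    (tangentOverlap fun i => p (m, i)).map (appendVec (Pi.single (m + 1) 1)) ≤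
      ⨆ c, tangent a (appendFactor (p c) (degenerateVec ε c)) := by
  rw [Submodule.map_le_iff_le_comap]
  refine iSup₂_le fun i j => iSup_le fun hij => ?_
  rintro x ⟨hxi, hxj⟩
  have hscalar : ε * ((i : ℕ) - (j : ℕ) : ℂ) ≠ 0 :=
    mul_ne_zero hε (sub_ne_zero.2 fun h => hij (Fin.ext (Nat.cast_injective h)))
  have hx := appendVec_sub_mem_tangent_sup hxi hxj (degenerateVec ε (m, i)) (degenerateVec ε (m, j))
  rw [degenerateVec_sub_degenerateVec, map_smul, LinearMap.smul_apply,
    Submodule.smul_mem_iff _ hscalar] at hx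
  let T (c : Fin (a (Fin.last q) + 1) × Fin s) :=
    tangent a (appendFactor (p c) (degenerateVec ε c))
  exact sup_le (le_iSup T (m, i)) (le_iSup T (m, j)) hx

theorem map_appendVec_slotSpan_sup_tangentOverlap_le (l : Fin (a (Fin.last q) + 1)) :
    (slotSpan Prod.fst p l ⊔ tangentOverlap fun i => p (l - 1, i)).map
        (appendVec (Pi.single l 1)) ≤
      (⨆ c, tangent a (appendFactor (p c) (degenerateVec 0 c))) ⊔
        ⨆ m, (tangentOverlap fun i => p (m, i)).map (appendVec (Pi.single (m + 1) 1)) := by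
  rw [Submodule.map_sup]
  refine sup_le_sup ?_ (le_iSup_of_le (l - 1) ?_)
  · simp only [degenerateVec_zero]
    exact map_appendVec_slotSpan_le Prod.fst p l
  · rw [sub_add_cancel]

/-- The overlaps in the slot `l - 1` survive in the limit `ε → 0` of the sum of the tangent spaces
at the points `p c ⊗ degenerateVec ε c`, where they contribute to the slice in the slot `l`. -/
theorem exists_sum_finrank_slotSpan_sup_tangentOverlap_le :
    ∃ P : Fin (a (Fin.last q) + 1) × Fin s → ∀ j, Fin (a j + 1) → ℂ,
      ∑ l, Module.finrank ℂ ↥(slotSpan Prod.fst p l ⊔ tangentOverlap fun i => p (l - 1, i)) ≤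
        Module.finrank ℂ ↥(⨆ c, tangent a (P c)) := by
  have hpoly (c : Fin (a (Fin.last q) + 1) × Fin s) (j) :
      IsPolyMap fun ε : Unit → ℂ => appendFactor (p c) (degenerateVec (ε ()) c) j :=
    isPolyMap_appendFactor (fun j => isPolyMap_const (p c j)) (isPolyMap_degenerateVec c) j
  have hne : Generically fun ε : Unit → ℂ => ε () ≠ 0 := by
    simpa only [MvPolynomial.eval_X] using
      generically_eval_ne_zero (P := MvPolynomial.X ()) ⟨1, by simp⟩
  obtain ⟨ε, hle, hε⟩ := ((generically_le_finrank_iSup_tangent_sup hpoly _ (x₀ := 0)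
    (sum_finrank_le_of_map_appendVec_le (map_appendVec_slotSpan_sup_tangentOverlap_le p))).and
      hne).exists
  rw [sup_eq_left.2 (iSup_le (map_appendVec_tangentOverlap_le p hε))] at hle
  exact ⟨_, hle⟩

end Degeneration

section TwoFactors

theorem card_cross_union_block {α β : Type*} [Fintype α] [Fintype β] [DecidableEq α]
    [DecidableEq β] {X X' : Finset α} {Y Y' : Finset β} (hX : Disjoint X X')
    (hY : Disjoint Y Y') :
    (X ×ˢ Finset.univ ∪ Finset.univ ×ˢ Y ∪ X' ×ˢ Y').card + X.card * Y.card =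
      X.card * Fintype.card β + Fintype.card α * Y.card + X'.card * Y'.card := by
  have hdisj : Disjoint (X ×ˢ Finset.univ ∪ Finset.univ ×ˢ Y) (X' ×ˢ Y') :=
    Finset.disjoint_union_left.2
      ⟨Finset.disjoint_product.2 (.inl hX), Finset.disjoint_product.2 (.inr hY)⟩
  have hcross := Finset.card_union_add_card_inter (X ×ˢ (Finset.univ : Finset β))
    ((Finset.univ : Finset α) ×ˢ Y)
  rw [Finset.product_inter_product, Finset.inter_univ, Finset.univ_inter, Finset.card_product,
    Finset.card_product, Finset.card_product, Finset.card_univ, Finset.card_univ] at hcross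
  rw [Finset.card_union_of_disjoint hdisj, Finset.card_product X' Y']
  linarith

theorem piFinTwoEquiv_symm_eq_update_one {F : Fin 2 → Type*} (g : ∀ j, F j) (z : F 1) :
    (piFinTwoEquiv F).symm (g 0, z) = Function.update g 1 z := by
  funext j
  fin_cases j <;> rfl

theorem piFinTwoEquiv_symm_eq_update_zero {F : Fin 2 → Type*} (g : ∀ j, F j) (y : F 0) :
    (piFinTwoEquiv F).symm (y, g 1) = Function.update g 0 y := by
  funext j
  fin_cases j <;> rfl

variable {b : Fin 2 → ℕ} {ι M : Type*}

/-- The rank one matrix with the first factor of `v` and the second factor of `w`. -/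
def mixedTensor (v w : ∀ j, Fin (b j + 1) → ℂ) : Ten 2 b :=
  tprod ℂ (Function.update v 1 (w 1))

theorem mixedTensor_self (v : ∀ j, Fin (b j + 1) → ℂ) : mixedTensor v v = tprod ℂ v := by
  rw [mixedTensor, Function.update_eq_self]

theorem mixedTensor_mem_tangent_inf (v w : ∀ j, Fin (b j + 1) → ℂ) :
    mixedTensor v w ∈ tangent b v ⊓ tangent b w := by
  refine ⟨tprod_update_mem_tangent v 1 (w 1), ?_⟩
  have hvw : Function.update v 1 (w 1) = Function.update w 0 (v 0) := by
    funext j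
    fin_cases j <;> rfl
  rw [mixedTensor, hvw]
  exact tprod_update_mem_tangent w 0 (v 0)

theorem mixedTensor_mem_slotSpan_sup_tangentOverlap
    (p : M × ι → ∀ j, Fin (b j + 1) → ℂ) (l l' : M) (i j : ι) :
    mixedTensor (p (l', i)) (p (l', j)) ∈
      slotSpan Prod.fst p l ⊔ tangentOverlap fun i => p (l', i) := by
  rcases eq_or_ne i j with rfl | hij
  · rw [mixedTensor_self]
    exact Submodule.mem_sup_left (Submodule.mem_sup_right (Submodule.subset_span ⟨_, rfl⟩))
  · exact Submodule.mem_sup_right (Submodule.mem_iSup_of_mem i (Submodule.mem_iSup_of_mem j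
      (Submodule.mem_iSup_of_mem hij (mixedTensor_mem_tangent_inf _ _))))

theorem le_finrank_iSup_tangent_single_sup_span_mixedTensor [Fintype ι]
    (e : ∀ j, ι ⊕ ι ↪ Fin (b j + 1)) :
    Fintype.card ι * (b 0 + b 1 + 2) ≤ Module.finrank ℂ
      ↥((⨆ i, tangent b fun j => Pi.single (e j (.inl i)) 1) ⊔
        Submodule.span ℂ (Set.range fun z : ι × ι => mixedTensor
          (fun j => Pi.single (e j (.inr z.1)) 1) fun j => Pi.single (e j (.inr z.2)) 1)) := by
  -- The tangent spaces contain the rows `X 0` and the columns `X 1`, the mixed tensors the block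
  -- `X' 0 × X' 1`, which makes up for the intersections of these rows and columns.
  let X (j) : Finset (Fin (b j + 1)) := Finset.univ.map (Function.Embedding.inl.trans (e j))
  let X' (j) : Finset (Fin (b j + 1)) := Finset.univ.map (Function.Embedding.inr.trans (e j))
  have hdisj (j) : Disjoint (X j) (X' j) := by
    simp [X, X', Finset.disjoint_left]
  have hcard := card_cross_union_block (hdisj 0) (hdisj 1)
  simp only [X, X', Finset.card_map, Finset.card_univ, Fintype.card_fin] at hcard
  refine le_trans (le_of_eq (by linarith)) (card_le_finrank_of_basisVec_mem
    (piFinTwoEquiv fun j => Fin (b j + 1)).symm.injective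
    (U := X 0 ×ˢ Finset.univ ∪ Finset.univ ×ˢ X 1 ∪ X' 0 ×ˢ X' 1) ?_)
  rintro ⟨y, z⟩ hyz
  simp only [X, X', Finset.mem_union, Finset.mem_product, Finset.mem_map, Finset.mem_univ, true_and,
    and_true, Function.Embedding.trans_apply, Function.Embedding.inl_apply,
    Function.Embedding.inr_apply] at hyz
  rcases hyz with (⟨i, rfl⟩ | ⟨i, rfl⟩) | ⟨⟨i, rfl⟩, ⟨i', rfl⟩⟩
  · rw [piFinTwoEquiv_symm_eq_update_one fun j => e j (.inl i)]
    exact Submodule.mem_sup_left (Submodule.mem_iSup_of_mem i (basisVec_update_mem_tangent _ _ _))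
  · rw [piFinTwoEquiv_symm_eq_update_zero fun j => e j (.inl i)]
    exact Submodule.mem_sup_left (Submodule.mem_iSup_of_mem i (basisVec_update_mem_tangent _ _ _))
  · rw [piFinTwoEquiv_symm_eq_update_one fun j => e j (.inr i), ← tprod_update_single]
    exact Submodule.mem_sup_right (Submodule.subset_span ⟨(i, i'), rfl⟩)

theorem exists_le_finrank_iSup_tangent_sup_span_mixedTensor [Fintype ι]
    (hb : ∀ j, 2 * Fintype.card ι ≤ b j + 1) :
    ∃ v w : ι → ∀ j, Fin (b j + 1) → ℂ,
      Fintype.card ι * (b 0 + b 1 + 2) ≤ Module.finrank ℂ ↥((⨆ i, tangent b (v i)) ⊔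
        Submodule.span ℂ (Set.range fun z : ι × ι => mixedTensor (w z.1) (w z.2))) := by
  have he (j) : Nonempty (ι ⊕ ι ↪ Fin (b j + 1)) := Function.Embedding.nonempty_of_card_le (by
    rw [Fintype.card_sum, Fintype.card_fin, ← two_mul]
    exact hb j)
  obtain ⟨e⟩ := Classical.nonempty_pi.2 he
  exact ⟨fun i j => Pi.single (e j (.inl i)) 1, fun i j => Pi.single (e j (.inr i)) 1,
    le_finrank_iSup_tangent_single_sup_span_mixedTensor e⟩

variable [Fintype ι] [Fintype M] {l l' : M}

theorem exists_le_finrank_slotSpan_sup_span_mixedTensor (hl : l' ≠ l)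
    (hb : ∀ j, 2 * Fintype.card ι ≤ b j + 1)
    (hdim : Fintype.card ι * (b 0 + b 1 + Fintype.card M) ≤ (b 0 + 1) * (b 1 + 1)) :
    ∃ p : M × ι → ∀ j, Fin (b j + 1) → ℂ,
      Fintype.card ι * (b 0 + b 1 + Fintype.card M) ≤ Module.finrank ℂ ↥(slotSpan Prod.fst p l ⊔
        Submodule.span ℂ
          (Set.range fun z : ι × ι => mixedTensor (p (l', z.1)) (p (l', z.2)))) := by
  classical
  obtain ⟨v, w, hvw⟩ := exists_le_finrank_iSup_tangent_sup_span_mixedTensor hb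
  set L := (⨆ i, tangent b (v i)) ⊔
    Submodule.span ℂ (Set.range fun z : ι × ι => mixedTensor (w z.1) (w z.2))
  obtain ⟨y, hy⟩ := exists_min_le_finrank_sup_span_range
    (PiTensorProduct.span_tprod_eq_top (R := ℂ) (s := fun j => Fin (b j + 1) → ℂ)) L
    (({l, l'}ᶜ : Finset M) × ι)
  let p (c : M × ι) : ∀ j, Fin (b j + 1) → ℂ :=
    if h : c.1 ∈ ({l, l'}ᶜ : Finset M) then y (⟨c.1, h⟩, c.2) else if c.1 = l then v c.2 else w c.2
  have hpl (i : ι) : p (l, i) = v i := by simp [p]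
  have hpl' (i : ι) : p (l', i) = w i := by simp [p, hl]
  have hpy (c : ({l, l'}ᶜ : Finset M) × ι) : p (c.1, c.2) = y c := dif_pos c.1.2
  have hle : L ⊔ Submodule.span ℂ (Set.range (tprod ℂ ∘ y)) ≤ slotSpan Prod.fst p l ⊔
      Submodule.span ℂ (Set.range fun z : ι × ι => mixedTensor (p (l', z.1)) (p (l', z.2))) := by
    simp only [hpl']
    refine sup_le (sup_le_sup_right (iSup_le fun i => ?_) _)
      (le_sup_of_le_left (le_sup_of_le_right (Submodule.span_mono ?_)))
    · rw [← hpl]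
      exact le_sup_of_le_left
        (le_iSup (fun c : {c : M × ι // c.1 = l} => tangent b (p c)) ⟨(l, i), rfl⟩)
    · rintro _ ⟨c, rfl⟩
      exact ⟨(c.1, c.2), congrArg _ (hpy c)⟩
  refine ⟨p, le_trans (le_min ?_ ?_) (hy.trans (Submodule.finrank_mono hle))⟩
  · have hM : Fintype.card M = ({l, l'}ᶜ : Finset M).card + 2 := by
      rw [← Finset.card_compl_add_card {l, l'}, Finset.card_pair hl.symm]
    rw [Fintype.card_prod, Fintype.card_coe, hM]
    linarith
  · rwa [finrank_ten, Fin.prod_univ_two]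

theorem generically_slotSpan_sup_tangentOverlap (hl : l' ≠ l)
    (hb : ∀ j, 2 * Fintype.card ι ≤ b j + 1)
    (hdim : Fintype.card ι * (b 0 + b 1 + Fintype.card M) ≤ (b 0 + 1) * (b 1 + 1)) :
    Generically fun x : (M × ι) × (Σ j, Fin (b j + 1)) → ℂ =>
      Fintype.card ι * (b 0 + b 1 + Fintype.card M) ≤ Module.finrank ℂ
        ↥(slotSpan Prod.fst (points x) l ⊔ tangentOverlap fun i => points x (l', i)) := by
  obtain ⟨p, hp⟩ := exists_le_finrank_slotSpan_sup_span_mixedTensor hl hb hdim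
  let t (p : M × ι → ∀ j, Fin (b j + 1) → ℂ) : (M × ι) ⊕ (ι × ι) → Ten 2 b :=
    Sum.elim (fun c => tprod ℂ (p c)) fun z => mixedTensor (p (l', z.1)) (p (l', z.2))
  have hspan (p : M × ι → ∀ j, Fin (b j + 1) → ℂ) :
      (⨆ i : {c : M × ι // c.1 = l}, tangent b (p i)) ⊔ Submodule.span ℂ (Set.range (t p)) =
        slotSpan Prod.fst p l ⊔ Submodule.span ℂ
          (Set.range fun z : ι × ι => mixedTensor (p (l', z.1)) (p (l', z.2))) := by
    rw [Set.Sum.elim_range, Submodule.span_union, slotSpan, sup_assoc]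
  rw [← hspan] at hp
  have ht : ∀ z, IsPolyMap fun x : (M × ι) × (Σ j, Fin (b j + 1)) → ℂ => t (points x) z := by
    rintro (c | z)
    · exact isPolyMap_tprod (isPolyMap_points c)
    · exact isPolyMap_tprod_update (isPolyMap_points _) (isPolyMap_points _ _)
  refine (generically_le_finrank_iSup_tangent_sup_span (x₀ := fun z => p z.1 z.2.1 z.2.2)
    (p := fun (x : (M × ι) × (Σ j, Fin (b j + 1)) → ℂ) (i : {c : M × ι // c.1 = l}) =>
      points x i) (t := fun x => t (points x))
    (fun i => isPolyMap_points i.1) ht hp).mono fun x hx => ?_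
  rw [hspan] at hx
  refine hx.trans (Submodule.finrank_mono (sup_le le_sup_left (Submodule.span_le.2 ?_)))
  rintro _ ⟨z, rfl⟩
  exact mixedTensor_mem_slotSpan_sup_tangentOverlap _ _ _ _ _

end TwoFactors

section ThreeFactors

theorem two_mul_le_of_mul_le {s x y z : ℕ} (hyz : y ≤ z) (hz : 0 < z)
    (h : s * (x + y + (z + 1)) ≤ (x + 1) * (y + 1)) : 2 * s ≤ x + 1 := by
  by_contra! hlt
  nlinarith [Nat.mul_le_mul_right (x + y + (z + 1)) hlt, Nat.mul_le_mul_left x hyz]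

theorem nondefective_three {a : Fin 3 → ℕ} (h02 : a 0 ≤ a 2) (h12 : a 1 ≤ a 2) (h2 : 0 < a 2)
    {s k : ℕ} (hs : s * (a 0 + a 1 + (a 2 + 1)) ≤ (a 0 + 1) * (a 1 + 1))
    (hk : k ≤ (a 2 + 1) * s) : Nondefective a k := by
  have hpred (l : Fin (a 2 + 1)) : l - 1 ≠ l :=
    sub_eq_self.not.2 (Fin.one_eq_zero_iff.not.2 (by omega))
  have hs' : s * (a 1 + a 0 + (a 2 + 1)) ≤ (a 1 + 1) * (a 0 + 1) := by linarith
  have hdouble : ∀ j : Fin 2, 2 * Fintype.card (Fin s) ≤ a j.castSucc + 1 := by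
    rw [Fintype.card_fin, Fin.forall_fin_two]
    exact ⟨two_mul_le_of_mul_le h12 h2 hs, two_mul_le_of_mul_le h02 h2 hs'⟩
  have hdim : Fintype.card (Fin s) * (a 0 + a 1 + Fintype.card (Fin (a 2 + 1))) ≤
      (a 0 + 1) * (a 1 + 1) := by
    rwa [Fintype.card_fin, Fintype.card_fin]
  obtain ⟨x, hx⟩ := (Generically.forall fun l => generically_slotSpan_sup_tangentOverlap
    (b := fun j => a j.castSucc) (hpred l) hdouble hdim).exists
  obtain ⟨P, hP⟩ := exists_sum_finrank_slotSpan_sup_tangentOverlap_le (points x)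
  have hsum : Fintype.card (Fin (a 2 + 1) × Fin s) * (1 + ∑ j, a j) = ∑ _l : Fin (a 2 + 1),
      Fintype.card (Fin s) * (a 0 + a 1 + Fintype.card (Fin (a 2 + 1))) := by
    simp only [Finset.sum_const, Finset.card_univ, Fintype.card_prod, Fintype.card_fin,
      Fin.sum_univ_three, smul_eq_mul]
    ring
  have hindep : TangentsIndependent a P :=
    hsum.le.trans ((Finset.sum_le_sum fun l _ => hx l).trans hP)
  exact hindep.nondefective (by rwa [Fintype.card_prod, Fintype.card_fin, Fintype.card_fin])

end ThreeFactors

section Induction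

theorem add_div_mul_add_lt {u v σ r k : ℕ}
    (h : u * (r + 1) + k * (1 + (σ + r)) < v * (r + 1)) : u + (k / (r + 1) * σ + k) < v := by
  refine lt_of_mul_lt_mul_right (lt_of_le_of_lt ?_ h) (Nat.zero_le (r + 1))
  calc (u + (k / (r + 1) * σ + k)) * (r + 1)
      = u * (r + 1) + (k / (r + 1) * (r + 1) * σ + k * (r + 1)) := by ring
    _ ≤ u * (r + 1) + (k * σ + k * (r + 1)) := by gcongr; exact Nat.div_mul_le_self k (r + 1)
    _ = u * (r + 1) + k * (1 + (σ + r)) := by ring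

theorem one_add_sum_le {n : ℕ} (a : Fin (n + 3) → ℕ) :
    1 + ∑ i, a i ≤ (1 + (a 0 + a 1 + a 2)) * ∏ i : Fin (n + 1), (a i.succ.succ + 1) := by
  induction n with
  | zero =>
    rw [Fin.sum_univ_three]
    exact Nat.le_mul_of_pos_right _ (Finset.prod_pos fun _ _ => Nat.succ_pos _)
  | succ n ih =>
    calc 1 + ∑ i, a i ≤ (1 + ∑ i : Fin (n + 3), a i.castSucc) * (a (Fin.last (n + 3)) + 1) := by
          rw [Fin.sum_univ_castSucc]
          linarith [Nat.zero_le (a (Fin.last (n + 3)) * ∑ i : Fin (n + 3), a i.castSucc)]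
      _ ≤ _ := Nat.mul_le_mul_right _ (ih fun i => a i.castSucc)
      _ = _ := (mul_assoc _ _ _).trans (congrArg ((1 + (a 0 + a 1 + a 2)) * ·)
          (Fin.prod_univ_castSucc fun i : Fin (n + 2) => a i.succ.succ + 1).symm)

/-- The hypothesis is `k < (a₀ a₁ - a₂) P / (1 + ∑ aᵢ)`, with `P` the product of the `aᵢ + 1` over
`2 ≤ i`, cleared of subtraction and division. -/
theorem nondefective_of_lt {n k : ℕ} {a : Fin (n + 3) → ℕ} (h02 : a 0 ≤ a 2) (h12 : a 1 ≤ a 2)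
    (hk : a 2 * ∏ i : Fin (n + 1), (a i.succ.succ + 1) + k * (1 + ∑ i, a i) <
      a 0 * a 1 * ∏ i : Fin (n + 1), (a i.succ.succ + 1)) :
    Nondefective a (k + 1) := by
  induction n generalizing k with
  | zero =>
    have hprod : ∏ i : Fin (0 + 1), (a i.succ.succ + 1) = a 2 + 1 := Fin.prod_univ_one _
    rw [hprod, Fin.sum_univ_three] at hk
    have hlt := add_div_mul_add_lt hk
    have h2 : 0 < a 2 := Nat.pos_of_ne_zero fun h => by
      rw [show a 0 = 0 by omega, zero_mul] at hlt
      omega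
    refine nondefective_three h02 h12 h2 ?_ (Nat.lt_mul_div_succ k (Nat.succ_pos (a 2)))
    linarith [Nat.div_mul_le_self k (a 2 + 1)]
  | succ n ih =>
    set r := a (Fin.last (n + 3))
    set σ := ∑ i : Fin (n + 3), a i.castSucc with hσ
    set P := ∏ i : Fin (n + 1), (a i.castSucc.succ.succ + 1)
    have hprod : ∏ i : Fin (n + 2), (a i.succ.succ + 1) = P * (r + 1) := Fin.prod_univ_castSucc _
    rw [hprod, Fin.sum_univ_castSucc, ← mul_assoc, ← mul_assoc] at hk
    have hlt : a 2 * P + (k / (r + 1) * σ + k) < a 0 * a 1 * P := add_div_mul_add_lt hk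
    have hslice : Nondefective (fun j => a j.castSucc) (k / (r + 1) + 1) := by
      refine ih h02 h12 (lt_of_le_of_lt ?_ hlt)
      change a 2 * P + k / (r + 1) * (1 + σ) ≤ _
      linarith [Nat.div_le_self k (r + 1)]
    refine hslice.succ (Nat.lt_mul_div_succ k (Nat.succ_pos r)) ?_
    have hsum : 1 + σ ≤ (1 + (a 0 + a 1 + a 2)) * P := one_add_sum_le fun i => a i.castSucc
    calc (k / (r + 1) + 1) * σ + (k + 1) = k / (r + 1) * σ + k + (1 + σ) := by ring
      _ ≤ (a 0 + 1) * ((a 1 + 1) * P) := by linarith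
      _ = ∏ i : Fin (n + 3), (a i.castSucc + 1) := by
          rw [Fin.prod_univ_succ, Fin.prod_univ_succ]; rfl

theorem prod_filter_two_le {M : Type*} [CommMonoid M] {n : ℕ} (f : Fin (n + 2) → M) :
    ∏ i ∈ Finset.univ.filter (fun i : Fin (n + 2) => 2 ≤ (i : ℕ)), f i =
      ∏ i : Fin n, f i.succ.succ := by
  rw [Finset.prod_filter, Fin.prod_univ_succ, Fin.prod_univ_succ]
  simp

end Induction

theorem stmt_15_general (q : ℕ) (hq : 3 ≤ q) (a : Fin q → ℕ)
    (h02 : a ⟨0, by omega⟩ ≤ a ⟨2, by omega⟩) (h12 : a ⟨1, by omega⟩ ≤ a ⟨2, by omega⟩) (k : ℕ)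
    (hkb : k ≤ ⌈((∏ i, ((a i : ℚ) + 1)) -
        ((a ⟨0, by omega⟩ : ℚ) + (a ⟨1, by omega⟩ : ℚ) + (a ⟨2, by omega⟩ : ℚ) + 1) *
          ∏ i ∈ Finset.univ.filter (fun i : Fin q => 2 ≤ (i : ℕ)), ((a i : ℚ) + 1)) /
        (1 + ∑ i, (a i : ℚ))⌉₊) :
    ∃ F : MvPolynomial (WIdx q a k) ℂ,
      (∃ p, evalW F p ≠ 0) ∧
      ∀ p : Fin k → ∀ j : Fin q, Fin (a j + 1) → ℂ, evalW F p ≠ 0 →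
        Module.finrank ℂ ↥(⨆ i, tangent a (p i)) = k * (1 + ∑ i, a i) := by
  apply Nondefective.exists_evalW
  obtain ⟨n, rfl⟩ : ∃ n, q = n + 3 := ⟨q - 3, by omega⟩
  rcases k with _ | k
  · exact ⟨Fin.elim0, by simp [TangentsIndependent]⟩
  refine nondefective_of_lt h02 h12 ?_
  have hdim : (0 : ℚ) < 1 + ∑ i, (a i : ℚ) := by positivity
  have hlt := (lt_div_iff₀ hdim).1 (Nat.lt_ceil.1 hkb)
  rw [prod_filter_two_le, Fin.prod_univ_succ, Fin.prod_univ_succ] at hlt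
  change _ < (a 0 + 1 : ℚ) * ((a 1 + 1) * _) - (a 0 + a 1 + a 2 + 1) * _ at hlt
  qify
  linarith

/-- for `k` in the range of Theorem `stmt_14`, the span of the `k`
tangent spaces at `k` general points has the expected dimension `k(1 + Σᵢ aᵢ)`
(equivalently, the `k`-th secant variety of the Segre has the expected dimension). -/
theorem stmt_15 (q : ℕ) (hq : 3 ≤ q) (a : Fin q → ℕ) (hmono : Monotone a)
    (ha : ∀ i, 0 < a i) (k : ℕ) (hk : 0 < k)
    (hkb : (k : ℚ) ≤ ((∏ i, ((a i : ℚ) + 1)) -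
        ((a ⟨0, by omega⟩ : ℚ) + (a ⟨1, by omega⟩ : ℚ) + (a ⟨2, by omega⟩ : ℚ) + 1) *
          ∏ i ∈ Finset.univ.filter (fun i : Fin q => 2 ≤ (i : ℕ)), ((a i : ℚ) + 1)) /
        (1 + ∑ i, (a i : ℚ))) :
    ∃ F : MvPolynomial (WIdx q a k) ℂ,
      (∃ p, evalW F p ≠ 0) ∧
      ∀ p : Fin k → ∀ j : Fin q, Fin (a j + 1) → ℂ, evalW F p ≠ 0 →
        Module.finrank ℂ ↥(⨆ i, tangent a (p i)) = k * (1 + ∑ i, a i) := by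
  exact stmt_15_general q hq a (hmono (by simp)) (hmono (by simp)) k
    (Nat.cast_le.1 (hkb.trans (Nat.le_ceil _)))
end
end

section
/- Let q ≥ 3 and let a₁ ≤ a₂ ≤ ⋯ ≤ a_q be positive integers with a_q ≥ Π_{i=1}^{q−1}(a_i+1) − (2 + Σ_{i=1}^{q−1}a_i). Then for every positive integer k ≤ Π_{i=1}^{q−1}(a_i+1) − (1 + Σ_{i=1}^{q−1}a_i), the general tensor of rank k in ℂ^{a₁+1} ⊗ ⋯ ⊗ ℂ^{a_q+1} has a unique rank-k decomposition up to permutation of the summands; that is, the Segre product ℙ^{a₁}×⋯×ℙ^{a_q} is k-identifiable. -/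
open scoped TensorProduct
open PiTensorProduct

noncomputable section

/-!
Flattened along the distinguished factor `j₀`, a decomposition of a tensor becomes a rank
factorization `Xᵀ W`, where the rows of `X` are points of the cone over the Segre variety of the
remaining factors. Two rank factorizations differ by an invertible matrix, so the points of any
other decomposition lie in the span of the points of the given one. It remains to see that the span
of `n` general points `x m` meets the Segre variety only in the points themselves.

Suppose that `∑ m, c m • x m = y` lies on the cone, with `c i` and `c i'` nonzero. Over an algebraic
closure of the function field of the parameter space, differentiating this relation along the
coordinates of `x i` and of `x i'` puts the tangent spaces at both points into the sum of the span
of the `x m` and of the tangent space at `y`, which has dimension at most `n + ∑ j, a j`.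
Specializing the `x m` to coordinate points shows that the span of the `x m` and of the two tangent
spaces has dimension greater than that. The Nullstellensatz transfers `c i * c i' = 0` from the
generic point to general points.
-/

section Generic

variable {σ τ k : Type*} [CommRing k] [IsDomain k]

/-- The filter of generic points of the affine space `σ → k`: a property holds eventually along it
when it holds outside of the zero locus of some nonzero polynomial. -/
def generic (σ k : Type*) [CommRing k] [IsDomain k] : Filter (σ → k) where
  sets := {s | ∃ F : MvPolynomial σ k, F ≠ 0 ∧ ∀ z, MvPolynomial.eval z F ≠ 0 → z ∈ s}
  univ_sets := ⟨1, one_ne_zero, fun _ _ => trivial⟩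
  sets_of_superset := fun ⟨F, hF, hs⟩ hst => ⟨F, hF, fun z hz => hst (hs z hz)⟩
  inter_sets := by
    rintro s t ⟨F, hF, hs⟩ ⟨G, hG, ht⟩
    refine ⟨F * G, mul_ne_zero hF hG, fun z hz => ?_⟩
    rw [map_mul] at hz
    exact ⟨hs z (left_ne_zero_of_mul hz), ht z (right_ne_zero_of_mul hz)⟩

theorem tendsto_comp_generic {e : τ → σ} (he : Function.Injective e) :
    Filter.Tendsto (fun z : σ → k => z ∘ e) (generic σ k) (generic τ k) := by
  rintro s ⟨F, hF, hs⟩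
  refine ⟨MvPolynomial.rename e F, ?_, fun z hz => hs _ (by rwa [← MvPolynomial.eval_rename])⟩
  rwa [Ne, map_eq_zero_iff _ (MvPolynomial.rename_injective e he)]

end Generic

section Specialization

open MvPolynomial in
attribute [local instance] MvPolynomial.algebraMvPolynomial in
/-- By the Nullstellensatz, some power of `G` times a nonzero scalar is a combination of the `E e`
with coefficients over `R`. -/
theorem exists_ne_zero_forall_eval₂_eq_zero {R τ ε : Type*} [CommRing R] [IsDomain R] [Finite τ]
    (E : ε → MvPolynomial τ R) (G : MvPolynomial τ R)
    (h : ∀ z : τ → AlgebraicClosure (FractionRing R),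
      (∀ e, aeval z (E e) = 0) → aeval z G = 0) :
    ∃ F : R, F ≠ 0 ∧ ∀ {L : Type*} [CommRing L] [IsDomain L] (φ : R →+* L) (z : τ → L),
      φ F ≠ 0 → (∀ e, eval₂ φ z (E e) = 0) → eval₂ φ z G = 0 := by
  let k := FractionRing R
  let I : Ideal (MvPolynomial τ R) := Ideal.span (Set.range E)
  let toFrac := algebraMap (MvPolynomial τ R) (MvPolynomial τ k)
  have aeval_toFrac (z : τ → AlgebraicClosure k) (p : MvPolynomial τ R) :
      aeval z (toFrac p) = aeval z p := aeval_map_algebraMap k z p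
  have hG : toFrac G ∈ (I.map toFrac).radical := by
    rw [← vanishingIdeal_zeroLocus_eq_radical (K := AlgebraicClosure k), mem_vanishingIdeal_iff]
    intro z hz
    rw [aeval_toFrac]
    refine h z fun e => ?_
    rw [← aeval_toFrac]
    exact hz _ (Ideal.mem_map_of_mem _ (Ideal.subset_span ⟨e, rfl⟩))
  obtain ⟨n, hn⟩ := hG
  rw [← map_pow, IsLocalization.algebraMap_mem_map_algebraMap_iff
    ((nonZeroDivisors R).map (C (σ := τ)))] at hn
  obtain ⟨_, ⟨F, hF, rfl⟩, hmem⟩ := hn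
  refine ⟨F, nonZeroDivisors.ne_zero hF, fun {L} _ _ φ z hφ hz => ?_⟩
  have hI : I ≤ RingHom.ker (eval₂Hom φ z) := Ideal.span_le.mpr (Set.range_subset_iff.mpr hz)
  have hprod : φ F * eval₂ φ z G ^ n = 0 := by simpa using hI hmem
  exact eq_zero_of_pow_eq_zero ((mul_eq_zero.mp hprod).resolve_left hφ)

theorem exists_derivation_algebraMap_eq {R S T : Type*} [CommRing R] [CommRing S] [CommRing T]
    [Algebra R S] [Algebra R T] [Algebra S T] [IsScalarTower R S T] [Algebra.FormallyEtale S T]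
    (d : Derivation R S T) :
    ∃ D : Derivation R T T, ∀ s, D (algebraMap S T s) = d s := by
  let e := KaehlerDifferential.tensorKaehlerEquivOfFormallyEtale R S T
  refine ⟨((d.liftKaehlerDifferential.liftBaseChange T).comp e.symm.toLinearMap).compDer
    (KaehlerDifferential.D R T), fun s => ?_⟩
  simp [e, KaehlerDifferential.tensorKaehlerEquivOfFormallyEtale_symm_D_algebraMap]

theorem formallyEtale_algebraicClosure_fractionRing (R : Type*) [CommRing R] [IsDomain R]
    [CharZero R] : Algebra.FormallyEtale R (AlgebraicClosure (FractionRing R)) := by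
  have : Algebra.FormallyEtale R (FractionRing R) :=
    Algebra.FormallyEtale.of_isLocalization (nonZeroDivisors R)
  have : Algebra.FormallyEtale (FractionRing R) (AlgebraicClosure (FractionRing R)) :=
    Algebra.FormallyEtale.of_isSeparable _ _
  exact Algebra.FormallyEtale.comp R (FractionRing R) _

end Specialization

section LinearIndependence

open Matrix

variable {ω β k : Type*} [Finite ω] [Field k]

theorem exists_mul_eq_one_of_linearIndependent_row [Fintype β] [DecidableEq ω]
    {A : Matrix ω β k} (hA : LinearIndependent k A.row) : ∃ B : Matrix β ω k, A * B = 1 := by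
  cases nonempty_fintype ω
  rw [← mulVec_surjective_iff_exists_right_inverse]
  have hrange : A.mulVecLin.range = ⊤ := Submodule.eq_top_of_finrank_eq <| by
    rw [Module.finrank_fintype_fun_eq_card]
    exact hA.rank_matrix
  exact LinearMap.range_eq_top.mp hrange

theorem linearIndependent_row_of_isUnit_mul {ω : Type*} [Fintype ω] [DecidableEq ω] [Fintype β]
    {A : Matrix ω β k} {B : Matrix β ω k} (h : IsUnit (A * B)) : LinearIndependent k A.row := by
  have hAB : Function.Injective fun v => v ᵥ* (A * B) := vecMul_injective_of_isUnit h
  rw [← vecMul_injective_iff]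
  exact Function.Injective.of_comp (f := fun v => v ᵥ* B) <| by
    simpa only [Function.comp_def, vecMul_vecMul] using hAB

/-- `F` is a determinant of `A` multiplied by a right inverse of its specialization under `ε`. -/
theorem exists_map_eq_one_forall_linearIndependent {R : Type*} [CommRing R] [Algebra k R]
    [Finite β] (A : Matrix ω β R) (ε : R →ₐ[k] k) (h : LinearIndependent k (A.map ε).row) :
    ∃ F : R, ε F = 1 ∧ ∀ {L : Type*} [Field L] (φ : R →+* L), φ F ≠ 0 →
      LinearIndependent L (A.map φ).row := by
  classical
  cases nonempty_fintype ω
  cases nonempty_fintype β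
  obtain ⟨B, hB⟩ := exists_mul_eq_one_of_linearIndependent_row h
  refine ⟨(A * B.map (algebraMap k R)).det, ?_, fun {L} _ φ hφ => ?_⟩
  · rw [AlgHom.map_det, AlgHom.mapMatrix_apply, Matrix.map_mul, Matrix.map_map]
    simpa [Function.comp_def] using congrArg det hB
  · rw [RingHom.map_det, RingHom.mapMatrix_apply, Matrix.map_mul] at hφ
    exact linearIndependent_row_of_isUnit_mul ((isUnit_iff_isUnit_det _).mpr hφ.isUnit)

variable {σ : Type*} [Finite β] {v : ω → β → MvPolynomial σ k} {z₀ : σ → k}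

theorem eventually_linearIndependent_of_eval
    (h : LinearIndependent k fun w => MvPolynomial.eval z₀ ∘ v w) :
    ∀ᶠ z in generic σ k, LinearIndependent k fun w => MvPolynomial.eval z ∘ v w := by
  obtain ⟨F, hF, hind⟩ := exists_map_eq_one_forall_linearIndependent v (MvPolynomial.aeval z₀) h
  exact ⟨F, fun h0 => by simp [h0] at hF, fun z hz => hind _ hz⟩

theorem linearIndependent_algebraMap_of_eval {K : Type*} [Field K]
    [Algebra (MvPolynomial σ k) K] [FaithfulSMul (MvPolynomial σ k) K]
    (h : LinearIndependent k fun w => MvPolynomial.eval z₀ ∘ v w) :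
    LinearIndependent K fun w => algebraMap (MvPolynomial σ k) K ∘ v w := by
  obtain ⟨F, hF, hind⟩ := exists_map_eq_one_forall_linearIndependent v (MvPolynomial.aeval z₀) h
  refine hind _ ?_
  rw [Ne, FaithfulSMul.algebraMap_eq_zero_iff]
  exact fun h0 => by simp [h0] at hF

end LinearIndependence

section Segre

variable {ι : Type*} [Fintype ι] {β : ι → Type*} {R S : Type*} [CommRing R] [CommRing S]

/-- The affine Segre map, sending a family of vectors to the coordinates of their tensor
product: the coordinate at `f` is `∏ j, v j (f j)`. -/
def segre : MultilinearMap R (fun j => β j → R) ((∀ j, β j) → R) :=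
  MultilinearMap.pi fun f =>
    (MultilinearMap.mkPiAlgebra R ι R).compLinearMap fun j => LinearMap.proj (f j)

@[simp]
theorem segre_apply (v : ∀ j, β j → R) (f : ∀ j, β j) : segre v f = ∏ j, v j (f j) := rfl

theorem comp_segre (φ : R →+* S) (v : ∀ j, β j → R) : φ ∘ segre v = segre fun j => φ ∘ v j := by
  ext f
  simp

variable [DecidableEq ι]

theorem linearDeriv_single {M : ι → Type*} {N : Type*} [∀ j, AddCommGroup (M j)]
    [∀ j, Module R (M j)] [AddCommGroup N] [Module R N] (g : MultilinearMap R M N)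
    (v : ∀ j, M j) (j : ι) (u : M j) :
    g.linearDeriv v (Pi.single j u) = g (Function.update v j u) := by
  rw [MultilinearMap.linearDeriv_apply, Finset.sum_eq_single j]
  · rw [Pi.single_eq_same]
  · intro l _ hl
    rw [Pi.single_eq_of_ne hl, MultilinearMap.map_update_zero]
  · simp

theorem linearDeriv_smul_self {M : ι → Type*} {N : Type*} [∀ j, AddCommGroup (M j)]
    [∀ j, Module R (M j)] [AddCommGroup N] [Module R N] (g : MultilinearMap R M N)
    (v : ∀ j, M j) (c : ι → R) :
    g.linearDeriv v (fun j => c j • v j) = (∑ j, c j) • g v := by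
  simp [MultilinearMap.linearDeriv_apply, Finset.sum_smul]

omit [Fintype ι] in
theorem derivation_prod [Algebra S R] (D : Derivation S R R) (s : Finset ι) (g : ι → R) :
    D (∏ j ∈ s, g j) = ∑ j ∈ s, D (g j) * ∏ l ∈ s.erase j, g l := by
  induction s using Finset.induction_on with
  | empty => simp
  | insert j s hj ih =>
    have herase : ∀ l ∈ s, ∏ i ∈ (insert j s).erase l, g i = g j * ∏ i ∈ s.erase l, g i := by
      intro l hl
      have hlj : j ≠ l := fun h => hj (h ▸ hl)
      rw [Finset.erase_insert_of_ne hlj, Finset.prod_insert (by simp [hj])]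
    rw [Finset.prod_insert hj, Finset.sum_insert hj, Finset.erase_insert hj, D.leibniz, ih,
      smul_eq_mul, smul_eq_mul, Finset.mul_sum, add_comm, mul_comm (∏ l ∈ s, g l)]
    refine congrArg _ (Finset.sum_congr rfl fun l hl => ?_)
    rw [herase l hl, mul_left_comm]

theorem derivation_segre [Algebra S R] (D : Derivation S R R) (v : ∀ j, β j → R)
    (f : ∀ j, β j) :
    D (segre v f) = segre.linearDeriv v (fun j => D ∘ v j) f := by
  simp only [segre_apply, derivation_prod, MultilinearMap.linearDeriv_apply, Finset.sum_apply]
  refine Finset.sum_congr rfl fun j _ => ?_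
  rw [← Finset.mul_prod_erase _ _ (Finset.mem_univ j), Function.update_self, Function.comp_apply]
  refine congrArg _ (Finset.prod_congr rfl fun l hl => ?_)
  rw [Function.update_of_ne (Finset.ne_of_mem_erase hl)]

omit [DecidableEq ι] in
theorem segre_single_one [∀ j, DecidableEq (β j)] (h : ∀ j, β j) :
    segre (R := R) (fun j => Pi.single (h j) 1) = Pi.single h 1 := by
  ext f
  simp only [segre_apply, Pi.single_apply, Finset.prod_ite_zero, funext_iff]
  simp

omit [DecidableEq ι] in
theorem linearIndependent_segre_single [Nontrivial R] [∀ j, Finite (β j)] [∀ j, DecidableEq (β j)]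
    {ω : Type*} {h : ω → ∀ j, β j} (hh : Function.Injective h) :
    LinearIndependent R fun w => segre (R := R) fun j => Pi.single (h w j) 1 := by
  classical
  have (j : ι) : Fintype (β j) := Fintype.ofFinite _
  simp only [segre_single_one]
  exact (Pi.linearIndependent_single_one (∀ j, β j) R).comp h hh

end Segre

section SecantTangent

variable {κ ι : Type*} [Fintype ι] [DecidableEq ι] {β : ι → Type*} {K : Type*} [Field K]

/-- The span of the points `segre (x m)` and of the affine tangent space of the Segre variety at
`segre y`. -/
def secantTangent (x : κ → ∀ j, β j → K) (y : ∀ j, β j → K) : Submodule K ((∀ j, β j) → K) :=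
  Submodule.span K (Set.range fun m => segre (x m)) ⊔ LinearMap.range (segre.linearDeriv y)

theorem sum_smul_linearDeriv_derivation_mem_secantTangent [Fintype κ] {k : Type*} [CommRing k]
    [Algebra k K] (D : Derivation k K K) {x : κ → ∀ j, β j → K} {y : ∀ j, β j → K} {c : κ → K}
    (hy : ∑ m, c m • segre (x m) = segre y) :
    ∑ m, c m • segre.linearDeriv (x m) (fun j => D ∘ x m j) ∈ secantTangent x y := by
  have hD : ∑ m, c m • segre.linearDeriv (x m) (fun j => D ∘ x m j) =
      segre.linearDeriv y (fun j => D ∘ y j) - ∑ m, D (c m) • segre (x m) := by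
    ext f
    have hf : ∑ m, c m * segre (x m) f = segre y f := by simpa using congrFun hy f
    have hDf := congrArg D hf
    simp only [map_sum, D.leibniz, derivation_segre, smul_eq_mul, Finset.sum_add_distrib] at hDf
    simp only [Finset.sum_apply, Pi.sub_apply, Pi.smul_apply, smul_eq_mul, ← hDf, mul_comm (D _),
      add_sub_cancel_right]
  rw [hD]
  refine sub_mem (Submodule.mem_sup_right ⟨_, rfl⟩) (Submodule.mem_sup_left ?_)
  exact Submodule.sum_mem _ fun m _ => Submodule.smul_mem _ _ (Submodule.subset_span ⟨m, rfl⟩)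

/-- The family of factors of `κ` points on the cone over the Segre variety with coordinates `z`. -/
def factors {R : Type*} (z : κ × (Σ j, β j) → R) (m : κ) (j : ι) (b : β j) : R := z (m, ⟨j, b⟩)

omit [Fintype ι] [DecidableEq ι] in
theorem comp_factors {R S : Type*} (φ : R → S) (z : κ × (Σ j, β j) → R) (m : κ) (j : ι) :
    φ ∘ factors z m j = factors (φ ∘ z) m j := rfl

/-- Differentiate the relation `hy` along the coordinates of `x i`. -/
theorem range_linearDeriv_le_secantTangent [Fintype κ] {k : Type*} [CommRing k]
    [Algebra (MvPolynomial (κ × Σ j, β j) k) K] [Algebra k K]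
    [IsScalarTower k (MvPolynomial (κ × Σ j, β j) k) K]
    [Algebra.FormallyEtale (MvPolynomial (κ × Σ j, β j) k) K]
    {x : κ → ∀ j, β j → K} (hx : x = factors (algebraMap _ K ∘ MvPolynomial.X (R := k)))
    {y : ∀ j, β j → K} {c : κ → K} (hy : ∑ m, c m • segre (x m) = segre y) {i : κ}
    (hi : c i ≠ 0) : LinearMap.range (segre.linearDeriv (x i)) ≤ secantTangent x y := by
  classical
  rintro _ ⟨u, rfl⟩
  obtain ⟨D, hD⟩ := exists_derivation_algebraMap_eq <| MvPolynomial.mkDerivation k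
    fun w : κ × Σ j, β j => (if w.1 = i then u w.2.1 w.2.2 else 0 : K)
  have hDx (m : κ) : (fun j => D ∘ x m j) = if m = i then u else 0 := by
    ext j b
    split_ifs with hm <;> simp [hx, factors, hD, hm]
  have hmem := sum_smul_linearDeriv_derivation_mem_secantTangent D hy
  rw [Fintype.sum_eq_single i fun m hm => by rw [hDx, if_neg hm, map_zero, smul_zero], hDx,
    if_pos rfl] at hmem
  exact (Submodule.smul_mem_iff _ hi).mp hmem

/-- As `segre y` lies in the span, each factor of `y` contributes only `a j` tangent directions. -/
theorem finrank_secantTangent_le [Fintype κ] {a : ι → ℕ} {x : κ → ∀ j, Fin (a j + 1) → K}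
    {y : ∀ j, Fin (a j + 1) → K} (hy : segre y ∈ Submodule.span K (Set.range fun m => segre (x m)))
    (hy₀ : ∀ j, y j ≠ 0) :
    Module.finrank K (secantTangent x y) ≤ Fintype.card κ + ∑ j, a j := by
  choose b hb using fun j => Function.ne_iff.mp (hy₀ j)
  let e : (∀ j, Fin (a j) → K) →ₗ[K] ∀ j, Fin (a j + 1) → K :=
    LinearMap.piMap fun j => Function.ExtendByZero.linearMap K (b j).succAbove
  have hrange : LinearMap.range (segre.linearDeriv y) ≤
      Submodule.span K (Set.range fun m => segre (x m)) ⊔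
        LinearMap.range (segre.linearDeriv y ∘ₗ e) := by
    rintro _ ⟨u, rfl⟩
    let c (j : ι) : K := u j (b j) / y j (b j)
    let u' (j : ι) (l : Fin (a j)) : K := (u j - c j • y j) ((b j).succAbove l)
    have hu : u = (fun j => c j • y j) + e u' := by
      ext j l
      induction l using (b j).succAboveCases with
      | x => simp [e, c, Function.extend, div_mul_cancel₀ _ (hb j), Fin.succAbove_ne]
      | p l => simp [e, u', (Fin.succAbove_right_injective).extend_apply]
    rw [hu, map_add, linearDeriv_smul_self]
    exact add_mem (Submodule.mem_sup_left (Submodule.smul_mem _ _ hy))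
      (Submodule.mem_sup_right ⟨u', rfl⟩)
  calc Module.finrank K (secantTangent x y)
      ≤ Module.finrank K ↥(Submodule.span K (Set.range fun m => segre (x m)) ⊔
          LinearMap.range (segre.linearDeriv y ∘ₗ e)) :=
        Submodule.finrank_mono (sup_le le_sup_left hrange)
    _ ≤ _ := Submodule.finrank_add_le_finrank_add_finrank _ _
    _ ≤ Fintype.card κ + ∑ j, a j := by
        gcongr
        · exact finrank_range_le_card _
        · refine (LinearMap.finrank_range_le _).trans ?_
          simp [Module.finrank_pi_fintype]

end SecantTangent

section Neighbors

variable {κ ι : Type*} [DecidableEq ι] {a : ι → ℕ}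

/-- The points of a product obtained from `p` by replacing at most one of its coordinates `j` by
some `δ j b` with `b ≠ 0`. -/
def neighbor {M : ι → Type*} (δ : ∀ j, Fin (a j + 1) → M j) (p : ∀ j, M j) :
    Option (Σ j, Fin (a j)) → ∀ j, M j
  | none => p
  | some ⟨j, b⟩ => Function.update p j (δ j b.succ)

theorem map_neighbor {M N : ι → Type*} (δ : ∀ j, Fin (a j + 1) → M j) (φ : ∀ j, M j → N j)
    (p : ∀ j, M j) (o : Option (Σ j, Fin (a j))) :
    (fun j => φ j (neighbor δ p o j)) =
      neighbor (fun j b => φ j (δ j b)) (fun j => φ j (p j)) o := by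
  match o with
  | none => rfl
  | some ⟨j, b⟩ => exact funext fun l => Function.apply_update φ p j _ l

/-- Multi-indices with at least two nonzero entries; they index the coordinates that vanish on the
tangent space of the Segre variety at the coordinate point with index `0`. -/
def IsOffAxis (f : ∀ j, Fin (a j + 1)) : Prop := {j | f j ≠ 0}.Nontrivial

theorem neighbor_zero_injective :
    Function.Injective (neighbor (fun j (b : Fin (a j + 1)) => b) 0) := by
  have hne (j : ι) (b : Fin (a j)) : Function.update (0 : ∀ j, Fin (a j + 1)) j b.succ ≠ 0 :=
    fun h => b.succ_ne_zero (by simpa using congrFun h j)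
  rintro (_ | ⟨j, b⟩) (_ | ⟨l, d⟩) h
  · rfl
  · exact (hne l d h.symm).elim
  · exact (hne j b h).elim
  · have hj := congrFun h j
    obtain rfl | hjl := eq_or_ne j l
    · simpa [neighbor] using hj
    · simp [neighbor, Function.update_of_ne hjl] at hj

theorem isOffAxis_iff_notMem_range_neighbor {f : ∀ j, Fin (a j + 1)} :
    IsOffAxis f ↔ f ∉ Set.range (neighbor (fun j (b : Fin (a j + 1)) => b) 0) := by
  rw [IsOffAxis, ← Set.not_subsingleton_iff, not_iff_not]
  refine ⟨fun hf => ?_, ?_⟩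
  · by_cases hf₀ : f = 0
    · exact ⟨none, hf₀.symm⟩
    · obtain ⟨j, hj⟩ := Function.ne_iff.mp hf₀
      obtain ⟨b, hb⟩ := Fin.exists_succ_eq.mpr hj
      refine ⟨some ⟨j, b⟩, (Function.eq_update_iff.mpr ⟨hb.symm, fun l hl => ?_⟩).symm⟩
      by_contra hfl
      exact hl (hf hfl hj)
  · rintro ⟨_ | ⟨j, b⟩, rfl⟩
    · simp [neighbor]
    · refine Set.subsingleton_singleton.anti (t := {j}) fun l hl => ?_
      by_contra hlj
      exact hl (Function.update_of_ne hlj _ _)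

theorem sum_add_one_add_card_isOffAxis [Fintype ι] [DecidablePred (IsOffAxis (a := a))] :
    ∑ j, a j + 1 + Fintype.card {f : ∀ j, Fin (a j + 1) // IsOffAxis f} = ∏ j, (a j + 1) := by
  classical
  let e : Option (Σ j, Fin (a j)) ⊕ {f : ∀ j, Fin (a j + 1) // IsOffAxis f} ≃
      ∀ j, Fin (a j + 1) :=
    ((Equiv.ofInjective _ neighbor_zero_injective).sumCongr
      (Equiv.subtypeEquivRight fun _ => isOffAxis_iff_notMem_range_neighbor)).trans
      (Equiv.sumCompl (· ∈ Set.range (neighbor (fun _ b => b) 0)))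
  simpa only [Fintype.card_sum, Fintype.card_option, Fintype.card_sigma, Fintype.card_pi,
    Fintype.card_fin] using Fintype.card_congr e

theorem IsOffAxis.exists_update {f g : ∀ j, Fin (a j + 1)} (hf : IsOffAxis f) (hg : IsOffAxis g)
    (hfg : f ≠ g) : ∃ j, f j ≠ g j ∧ IsOffAxis (Function.update f j (g j)) := by
  by_cases h : ∃ j, f j ≠ g j ∧ g j ≠ 0
  · obtain ⟨j, hj, hgj⟩ := h
    refine ⟨j, hj, hf.mono fun l hl => ?_⟩
    obtain rfl | hlj := eq_or_ne l j
    · simpa using hgj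
    · simpa [hlj] using hl
  · push Not at h
    obtain ⟨j, hj⟩ := Function.ne_iff.mp hfg
    refine ⟨j, hj, hg.mono fun l hl => ?_⟩
    have hlj : l ≠ j := fun hlj => hl (hlj ▸ h j hj)
    have hfl : f l = g l := by_contra fun hne => hl (h l hne)
    simpa [hlj, hfl] using hl

theorem exists_embedding_isOffAxis [Fintype κ] [Fintype ι]
    (hcard : Fintype.card κ + ∑ j, a j + 1 ≤ ∏ j, (a j + 1)) {i i' : κ} (hi : i ≠ i') :
    ∃ (e : κ ↪ {f : ∀ j, Fin (a j + 1) // IsOffAxis f}) (j : ι) (b : Fin (a j + 1)),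
      Function.update (e i' : ∀ j, Fin (a j + 1)) j b = e i := by
  classical
  obtain ⟨e⟩ : Nonempty (κ ↪ {f : ∀ j, Fin (a j + 1) // IsOffAxis f}) :=
    Function.Embedding.nonempty_of_card_le (by have := sum_add_one_add_card_isOffAxis (a := a); lia)
  obtain ⟨j, hj, hoff⟩ := (e i').2.exists_update (e i).2
    (Subtype.coe_injective.ne (e.injective.ne hi.symm))
  let f : {f : ∀ j, Fin (a j + 1) // IsOffAxis f} := ⟨_, hoff⟩
  have hf : e i' ≠ f := fun h => hj (by simpa [f] using congrFun (congrArg Subtype.val h) j)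
  refine ⟨e.setValue i f, j, (e i : ∀ j, Fin (a j + 1)) j, ?_⟩
  rw [Function.Embedding.setValue_eq, Function.Embedding.setValue_eq_of_ne hi.symm hf]

end Neighbors

section Frame

variable {κ ι : Type*} [DecidableEq κ] [DecidableEq ι] {a : ι → ℕ}

/-- Factors of a family of vectors in the span of all `segre (x m)` and of the tangent spaces at
`x i` and `x i'`: the neighbors of `x i` span the tangent space there, and the tangent vector at
`x i'` in direction `δ j₀ b₀` takes the place of `x i` among the remaining vectors. -/
def tangentFrame {M : ι → Type*} (δ : ∀ j, Fin (a j + 1) → M j) (x : κ → ∀ j, M j) (i i' : κ)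
    (j₀ : ι) (b₀ : Fin (a j₀ + 1)) : Option (Σ j, Fin (a j)) ⊕ κ → ∀ j, M j :=
  Sum.elim (neighbor δ (x i)) (Function.update x i (Function.update (x i') j₀ (δ j₀ b₀)))

theorem map_tangentFrame {M N : ι → Type*} (δ : ∀ j, Fin (a j + 1) → M j) (φ : ∀ j, M j → N j)
    (x : κ → ∀ j, M j) (i i' : κ) (j₀ : ι) (b₀ : Fin (a j₀ + 1))
    (w : Option (Σ j, Fin (a j)) ⊕ κ) :
    (fun j => φ j (tangentFrame δ x i i' j₀ b₀ w j)) =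
      tangentFrame (fun j b => φ j (δ j b)) (fun m j => φ j (x m j)) i i' j₀ b₀ w := by
  match w with
  | .inl o => exact map_neighbor δ φ (x i) o
  | .inr m =>
    funext l
    obtain rfl | hm := eq_or_ne m i
    · simpa [tangentFrame] using Function.apply_update φ (x i') j₀ (δ j₀ b₀) l
    · simp [tangentFrame, hm]

theorem exists_tangentFrame_injective [Fintype κ] [Fintype ι]
    (hcard : Fintype.card κ + ∑ j, a j + 1 ≤ ∏ j, (a j + 1)) {i i' : κ} (hi : i ≠ i') :
    ∃ (h : κ → ∀ j, Fin (a j + 1)) (j₀ : ι) (b₀ : Fin (a j₀ + 1)),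
      Function.Injective (tangentFrame (fun _ b => b) h i i' j₀ b₀) := by
  obtain ⟨e, j₀, b₀, he⟩ := exists_embedding_isOffAxis hcard hi
  refine ⟨Function.update (fun m => (e m : ∀ j, Fin (a j + 1))) i 0, j₀, b₀, ?_⟩
  rw [tangentFrame, Function.update_self, Function.update_of_ne hi.symm, he,
    Function.update_idem, Function.update_eq_self]
  refine neighbor_zero_injective.sumElim (Subtype.coe_injective.comp e.injective) fun o m h => ?_
  exact isOffAxis_iff_notMem_range_neighbor.mp (e m).2 ⟨o, h⟩

variable [Fintype ι] {R S K : Type*} [CommRing R] [CommRing S] [Field K]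

/-- A family of vectors in the span of all `segre (x m)` and of the tangent spaces at `x i` and
`x i'`, which is linearly independent for general `x`. -/
def tangentVectors (x : κ → ∀ j, Fin (a j + 1) → R) (i i' : κ) (j₀ : ι) (b₀ : Fin (a j₀ + 1))
    (w : Option (Σ j, Fin (a j)) ⊕ κ) : (∀ j, Fin (a j + 1)) → R :=
  segre (tangentFrame (fun _ b => Pi.single b 1) x i i' j₀ b₀ w)

theorem comp_tangentVectors (φ : R →+* S) (x : κ → ∀ j, Fin (a j + 1) → R) (i i' : κ) (j₀ : ι)
    (b₀ : Fin (a j₀ + 1)) (w : Option (Σ j, Fin (a j)) ⊕ κ) :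
    φ ∘ tangentVectors x i i' j₀ b₀ w =
      tangentVectors (fun m j => φ ∘ x m j) i i' j₀ b₀ w := by
  have hφ (j : ι) (b : Fin (a j + 1)) : φ ∘ (Pi.single b 1 : _ → R) = Pi.single b 1 := by
    ext l
    rw [Function.comp_apply, Pi.apply_single (fun _ => φ) (fun _ => map_zero φ), map_one]
  rw [tangentVectors, comp_segre, map_tangentFrame _ (fun _ u => φ ∘ u)]
  simp only [hφ, tangentVectors]

theorem linearIndependent_tangentVectors_single [Nontrivial R] {h : κ → ∀ j, Fin (a j + 1)}
    {i i' : κ} {j₀ : ι} {b₀ : Fin (a j₀ + 1)}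
    (hinj : Function.Injective (tangentFrame (fun _ b => b) h i i' j₀ b₀)) :
    LinearIndependent R
      (tangentVectors (R := R) (fun m j => Pi.single (h m j) 1) i i' j₀ b₀) := by
  convert linearIndependent_segre_single (R := R) hinj using 2 with w
  exact congrArg segre
    (map_tangentFrame _ (fun _ b => Pi.single b (1 : R)) h i i' j₀ b₀ w).symm

theorem tangentVectors_mem (x : κ → ∀ j, Fin (a j + 1) → K) (i i' : κ) (j₀ : ι)
    (b₀ : Fin (a j₀ + 1)) (w : Option (Σ j, Fin (a j)) ⊕ κ) :
    tangentVectors x i i' j₀ b₀ w ∈ Submodule.span K (Set.range fun m => segre (x m)) ⊔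
      (LinearMap.range (segre.linearDeriv (x i)) ⊔
        LinearMap.range (segre.linearDeriv (x i'))) := by
  have hsegre (m : κ) : segre (x m) ∈ Submodule.span K (Set.range fun m => segre (x m)) :=
    Submodule.subset_span ⟨m, rfl⟩
  match w with
  | .inl none => exact Submodule.mem_sup_left (hsegre i)
  | .inl (some ⟨j, b⟩) =>
    exact Submodule.mem_sup_right (Submodule.mem_sup_left ⟨_, linearDeriv_single _ _ _ _⟩)
  | .inr m =>
    obtain rfl | hm := eq_or_ne m i
    · rw [tangentVectors, tangentFrame, Sum.elim_inr, Function.update_self]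
      exact Submodule.mem_sup_right (Submodule.mem_sup_right ⟨_, linearDeriv_single _ _ _ _⟩)
    · rw [tangentVectors, tangentFrame, Sum.elim_inr, Function.update_of_ne hm]
      exact Submodule.mem_sup_left (hsegre m)

end Frame

section GenericSecant

variable {κ ι : Type*} [Fintype ι]

theorem eval_comp_X {σ k : Type*} [CommRing k] (z : σ → k) :
    MvPolynomial.eval z ∘ MvPolynomial.X = z :=
  funext fun _ => MvPolynomial.eval_X _

theorem exists_linearIndependent_eval_segre_factors [Fintype κ] {k : Type*} [Field k]
    {β : ι → Type*} [∀ j, Fintype (β j)]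
    (hcard : Fintype.card κ ≤ ∏ j, Fintype.card (β j)) :
    ∃ z₀ : κ × (Σ j, β j) → k, LinearIndependent k fun m =>
      MvPolynomial.eval z₀ ∘ segre (factors MvPolynomial.X m) := by
  classical
  obtain ⟨h⟩ : Nonempty (κ ↪ ∀ j, β j) :=
    Function.Embedding.nonempty_of_card_le (by rwa [Fintype.card_pi])
  refine ⟨fun w => (Pi.single (h w.1 w.2.1) 1 : β w.2.1 → k) w.2.2, ?_⟩
  simp only [comp_segre, comp_factors, eval_comp_X]
  exact linearIndependent_segre_single h.injective

variable [Fintype κ] {a : ι → ℕ} {k K : Type*} [Field k]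
  [Field K] [Algebra (MvPolynomial (κ × Σ j, Fin (a j + 1)) k) K]
  [FaithfulSMul (MvPolynomial (κ × Σ j, Fin (a j + 1)) k) K] {x : κ → ∀ j, Fin (a j + 1) → K}

theorem exists_linearIndependent_tangentVectors [DecidableEq ι] [DecidableEq κ]
    (hx : x = factors (algebraMap _ K ∘ MvPolynomial.X (R := k)))
    (hcard : Fintype.card κ + ∑ j, a j + 1 ≤ ∏ j, (a j + 1)) {i i' : κ} (hi : i ≠ i') :
    ∃ (j₀ : ι) (b₀ : Fin (a j₀ + 1)), LinearIndependent K (tangentVectors x i i' j₀ b₀) := by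
  obtain ⟨h, j₀, b₀, hinj⟩ := exists_tangentFrame_injective hcard hi
  let v := tangentVectors (factors (MvPolynomial.X (R := k))) i i' j₀ b₀
  let z₀ (w : κ × Σ j, Fin (a j + 1)) : k := (Pi.single (h w.1 w.2.1) 1 : _ → k) w.2.2
  have hz₀ : LinearIndependent k fun w => MvPolynomial.eval z₀ ∘ v w := by
    simp only [v, comp_tangentVectors, comp_factors, eval_comp_X]
    exact linearIndependent_tangentVectors_single hinj
  refine ⟨j₀, b₀, ?_⟩
  simpa only [v, comp_tangentVectors, comp_factors, hx] using
    linearIndependent_algebraMap_of_eval (K := K) hz₀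

theorem card_lt_finrank_tangent_sup_tangent [DecidableEq ι]
    (hx : x = factors (algebraMap _ K ∘ MvPolynomial.X (R := k)))
    (hcard : Fintype.card κ + ∑ j, a j + 1 ≤ ∏ j, (a j + 1)) {i i' : κ} (hi : i ≠ i') :
    Fintype.card κ + ∑ j, a j < Module.finrank K ↥(
      Submodule.span K (Set.range fun m => segre (x m)) ⊔
        (LinearMap.range (segre.linearDeriv (x i)) ⊔
          LinearMap.range (segre.linearDeriv (x i')))) := by
  classical
  obtain ⟨j₀, b₀, hind⟩ := exists_linearIndependent_tangentVectors hx hcard hi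
  calc Fintype.card κ + ∑ j, a j
      < Fintype.card (Option (Σ j, Fin (a j)) ⊕ κ) := by simp; lia
    _ = Module.finrank K (Submodule.span K (Set.range (tangentVectors x i i' j₀ b₀))) :=
        (finrank_span_eq_card hind).symm
    _ ≤ _ := Submodule.finrank_mono <|
        Submodule.span_le.mpr <| Set.range_subset_iff.mpr <| tangentVectors_mem x i i' j₀ b₀

/-- Otherwise `secantTangent x y` contains the tangent spaces at both points, which is too much by
a dimension count. -/
theorem mul_eq_zero_of_sum_smul_segre_eq [Algebra k K]
    [IsScalarTower k (MvPolynomial (κ × Σ j, Fin (a j + 1)) k) K]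
    [Algebra.FormallyEtale (MvPolynomial (κ × Σ j, Fin (a j + 1)) k) K]
    (hx : x = factors (algebraMap _ K ∘ MvPolynomial.X (R := k)))
    (hcard : Fintype.card κ + ∑ j, a j + 1 ≤ ∏ j, (a j + 1)) {c : κ → K}
    {y : ∀ j, Fin (a j + 1) → K} (hy : ∑ m, c m • segre (x m) = segre y) {i i' : κ}
    (hi : i ≠ i') : c i * c i' = 0 := by
  classical
  by_contra! hc
  have hy₀ (j : ι) : y j ≠ 0 := by
    rintro hj
    have hind : LinearIndependent K fun m => segre (x m) := by
      obtain ⟨z₀, hz₀⟩ := exists_linearIndependent_eval_segre_factors (k := k) (κ := κ)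
        (β := fun j => Fin (a j + 1)) (by simp only [Fintype.card_fin]; lia)
      simpa only [comp_segre, comp_factors, hx] using
        linearIndependent_algebraMap_of_eval (K := K) hz₀
    refine left_ne_zero_of_mul hc (Fintype.linearIndependent_iff.mp hind c ?_ i)
    rw [hy, MultilinearMap.map_coord_zero _ j hj]
  have hspan : segre y ∈ Submodule.span K (Set.range fun m => segre (x m)) :=
    hy ▸ Submodule.sum_mem _ fun m _ => Submodule.smul_mem _ _ (Submodule.subset_span ⟨m, rfl⟩)
  refine (card_lt_finrank_tangent_sup_tangent hx hcard hi).not_ge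
    (le_trans (Submodule.finrank_mono ?_) (finrank_secantTangent_le hspan hy₀))
  exact sup_le le_sup_left <| sup_le
    (range_linearDeriv_le_secantTangent hx hy (left_ne_zero_of_mul hc))
    (range_linearDeriv_le_secantTangent hx hy (right_ne_zero_of_mul hc))

end GenericSecant

section SpanMeetsOnlyAt

/-- The span of the vectors `X m` meets `S` only in multiples of the `X m`; stated through the
coefficients of the linear combinations. -/
def SpanMeetsOnlyAt (K : Type*) {κ V : Type*} [Fintype κ] [Semiring K] [AddCommMonoid V]
    [Module K V] (S : Set V) (X : κ → V) : Prop :=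
  ∀ c : κ → K, ∑ m, c m • X m ∈ S → (Function.support c).Subsingleton

variable {κ ι : Type*} [Fintype κ] [Fintype ι] {a : ι → ℕ} {k : Type*} [Field k]

/-- The equations, in unknowns `C m` and `Y j b`, of the vanishing of the coordinate at `f` of
`∑ m, C m • segre (x m) - segre Y` for points `x m` whose coordinates are parameters. -/
def secantEquation (k κ : Type*) [Fintype κ] [Field k] {β : ι → Type*} (f : ∀ j, β j) :
    MvPolynomial (κ ⊕ Σ j, β j) (MvPolynomial (κ × Σ j, β j) k) :=
  ∑ m, MvPolynomial.X (.inl m) * MvPolynomial.C (segre (factors MvPolynomial.X m) f) -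
    segre (fun j b => MvPolynomial.X (.inr ⟨j, b⟩)) f

theorem forall_eval₂_secantEquation_eq_zero_iff {β : ι → Type*} {L : Type*} [CommRing L]
    (φ : MvPolynomial (κ × Σ j, β j) k →+* L) (y : κ ⊕ (Σ j, β j) → L) :
    (∀ f, MvPolynomial.eval₂ φ y (secantEquation k κ f) = 0) ↔
      ∑ m, y (.inl m) • segre (factors (φ ∘ MvPolynomial.X) m) =
        segre fun j b => y (.inr ⟨j, b⟩) := by
  simp [secantEquation, factors, funext_iff, sub_eq_zero, MvPolynomial.eval₂_sub,
    MvPolynomial.eval₂_sum, MvPolynomial.eval₂_prod]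

theorem eventually_mul_eq_zero_of_sum_smul_segre_eq [CharZero k]
    (hcard : Fintype.card κ + ∑ j, a j + 1 ≤ ∏ j, (a j + 1)) {i i' : κ} (hi : i ≠ i') :
    ∀ᶠ z in generic (κ × Σ j, Fin (a j + 1)) k,
      ∀ (c : κ → k) (y : ∀ j, Fin (a j + 1) → k),
        ∑ m, c m • segre (factors z m) = segre y → c i * c i' = 0 := by
  let R := MvPolynomial (κ × Σ j, Fin (a j + 1)) k
  have := formallyEtale_algebraicClosure_fractionRing R
  have := FaithfulSMul.trans R (FractionRing R) (AlgebraicClosure (FractionRing R))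
  obtain ⟨F, hF, hzero⟩ := exists_ne_zero_forall_eval₂_eq_zero
    (secantEquation k κ (β := fun j => Fin (a j + 1)))
    (MvPolynomial.X (.inl i) * MvPolynomial.X (.inl i')) fun y hy => by
      simp only [MvPolynomial.aeval_def, forall_eval₂_secantEquation_eq_zero_iff] at hy
      simpa using mul_eq_zero_of_sum_smul_segre_eq rfl hcard hy hi
  refine ⟨F, hF, fun z hz c y hy => ?_⟩
  have h := hzero (MvPolynomial.eval z) (Sum.elim c fun w => y w.1 w.2) hz <|
    (forall_eval₂_secantEquation_eq_zero_iff _ _).mpr <| by rwa [eval_comp_X]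
  simpa using h

theorem eventually_spanMeetsOnlyAt [CharZero k]
    (hcard : Fintype.card κ + ∑ j, a j + 1 ≤ ∏ j, (a j + 1)) :
    ∀ᶠ z in generic (κ × Σ j, Fin (a j + 1)) k,
      SpanMeetsOnlyAt k (Set.range segre) fun m => segre (factors z m) := by
  classical
  have hpairs : ∀ᶠ z in generic (κ × Σ j, Fin (a j + 1)) k, ∀ i i' : κ, i ≠ i' →
      ∀ (c : κ → k) (y : ∀ j, Fin (a j + 1) → k),
        ∑ m, c m • segre (factors z m) = segre y → c i * c i' = 0 := by
    simp only [Filter.eventually_all]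
    exact fun i i' hi => eventually_mul_eq_zero_of_sum_smul_segre_eq hcard hi
  filter_upwards [hpairs] with z hz c ⟨y, hy⟩ i hi i' hi'
  by_contra hne
  exact mul_ne_zero hi hi' (hz i i' hne c y hy.symm)

theorem eventually_linearIndependent_segre_factors {β : ι → Type*} [∀ j, Fintype (β j)]
    (hcard : Fintype.card κ ≤ ∏ j, Fintype.card (β j)) :
    ∀ᶠ z in generic (κ × Σ j, β j) k, LinearIndependent k fun m => segre (factors z m) := by
  classical
  obtain ⟨z₀, hz₀⟩ := exists_linearIndependent_eval_segre_factors (k := k) hcard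
  simpa only [comp_segre, comp_factors, eval_comp_X] using eventually_linearIndependent_of_eval hz₀

theorem eventually_linearIndependent_curry {β : Type*} [Fintype β]
    (hcard : Fintype.card κ ≤ Fintype.card β) :
    ∀ᶠ z in generic (κ × β) k, LinearIndependent k (Function.curry z) := by
  classical
  obtain ⟨e⟩ := Function.Embedding.nonempty_of_card_le hcard
  let v : κ → β → MvPolynomial (κ × β) k := Function.curry MvPolynomial.X
  have hv (z : κ × β → k) (m : κ) : MvPolynomial.eval z ∘ v m = Function.curry z m :=
    congrArg (Function.curry · m) (eval_comp_X z)
  have hz₀ : LinearIndependent k fun m =>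
      MvPolynomial.eval (fun w : κ × β => (Pi.single (e w.1) 1 : β → k) w.2) ∘ v m := by
    simp only [hv]
    exact (Pi.linearIndependent_single_one β k).comp e e.injective
  simpa only [hv] using eventually_linearIndependent_of_eval hz₀

end SpanMeetsOnlyAt

section RankDecomposition

open Matrix

variable {κ ω β K : Type*} [Fintype κ] [Finite ω] [Finite β] [Field K]

theorem exists_isUnit_of_transpose_mul_eq [DecidableEq κ] {X X' : Matrix κ ω K}
    {W W' : Matrix κ β K} (hX : LinearIndependent K X.row) (hW : LinearIndependent K W.row)
    (h : X'ᵀ * W' = Xᵀ * W) :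
    ∃ C : Matrix κ κ K, IsUnit C ∧ X' = C * X ∧ W = Cᵀ * W' := by
  cases nonempty_fintype ω
  cases nonempty_fintype β
  obtain ⟨Y, hY⟩ := exists_mul_eq_one_of_linearIndependent_row hX
  obtain ⟨V, hV⟩ := exists_mul_eq_one_of_linearIndependent_row hW
  have hX' : X = (W' * V)ᵀ * X' := by
    rw [← transpose_inj, transpose_mul, transpose_transpose, ← Matrix.mul_assoc, h,
      Matrix.mul_assoc, hV, Matrix.mul_one]
  have hW' : W = (X' * Y)ᵀ * W' := by
    rw [transpose_mul, Matrix.mul_assoc, h, ← Matrix.mul_assoc, ← transpose_mul, hY,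
      transpose_one, Matrix.one_mul]
  have hinv : (X' * Y) * (W' * V)ᵀ = 1 := by
    rw [mul_eq_one_comm, ← Matrix.mul_assoc, ← hX', hY]
  refine ⟨X' * Y, .of_mul_eq_one _ hinv, ?_, hW'⟩
  rw [hX', ← Matrix.mul_assoc, hinv, Matrix.one_mul]

theorem exists_perm_forall_ne_eq_zero [DecidableEq κ] {C : Matrix κ κ K} (hC : IsUnit C)
    (hrow : ∀ l, (Function.support (C l)).Subsingleton) :
    ∃ σ : Equiv.Perm κ, ∀ l m, m ≠ σ l → C l m = 0 := by
  have hdet : Cᵀ.det ≠ 0 := by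
    rw [det_transpose]
    exact ((isUnit_iff_isUnit_det C).mp hC).ne_zero
  rw [det_apply] at hdet
  obtain ⟨σ, -, hσ⟩ := Finset.exists_ne_zero_of_sum_ne_zero hdet
  have hσC (l : κ) : C l (σ l) ≠ 0 := fun hl =>
    hσ (by rw [Finset.prod_eq_zero (Finset.mem_univ l) hl, smul_zero])
  exact ⟨σ, fun l m hm => by_contra fun hlm => hm (hrow l hlm (hσC l))⟩

omit [Finite ω] [Finite β] in
theorem sum_vecMulVec_eq_transpose_mul (X : κ → ω → K) (W : κ → β → K) :
    ∑ l, vecMulVec (X l) (W l) = (of X)ᵀ * of W := by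
  ext f b
  simp [Matrix.sum_apply, vecMulVec_apply, mul_apply]

theorem exists_perm_vecMulVec_eq {S : Set (ω → K)} {X X' : κ → ω → K} {W W' : κ → β → K}
    (hX : LinearIndependent K X) (hW : LinearIndependent K W) (hS : SpanMeetsOnlyAt K S X)
    (hX' : ∀ l, X' l ∈ S)
    (h : ∑ l, vecMulVec (X' l) (W' l) = ∑ l, vecMulVec (X l) (W l)) :
    ∃ σ : Equiv.Perm κ, ∀ l, vecMulVec (X' l) (W' l) = vecMulVec (X (σ l)) (W (σ l)) := by
  classical
  rw [sum_vecMulVec_eq_transpose_mul, sum_vecMulVec_eq_transpose_mul] at h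
  obtain ⟨C, hC, hCX, hCW⟩ := exists_isUnit_of_transpose_mul_eq hX hW h
  have hCX_row (l : κ) : X' l = ∑ m, C l m • X m := by
    ext f
    have hf : X' l f = ∑ m, C l m * X m f := congrFun (congrFun hCX l) f
    simpa using hf
  obtain ⟨σ, hσ⟩ := exists_perm_forall_ne_eq_zero hC fun l => hS (C l) (hCX_row l ▸ hX' l)
  refine ⟨σ, fun l => ?_⟩
  have hXl : X' l = C l (σ l) • X (σ l) := by
    rw [hCX_row, Fintype.sum_eq_single (σ l) fun m hm => by rw [hσ l m hm, zero_smul]]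
  have hWl : W (σ l) = C l (σ l) • W' l := by
    ext b
    have hb : W (σ l) b = ∑ m, C m (σ l) * W' m b := congrFun (congrFun hCW (σ l)) b
    rw [hb, Fintype.sum_eq_single l fun m hm => by rw [hσ m _ (σ.injective.ne hm.symm), zero_mul],
      Pi.smul_apply, smul_eq_mul]
  rw [hXl, hWl, smul_vecMulVec, vecMulVec_smul]

end RankDecomposition

section Flatten

variable {ι : Type*} [Fintype ι] [DecidableEq ι] {β : ι → Type*} [∀ j, Fintype (β j)]
  {K : Type*} [Field K]

/-- The flattening of a tensor to a matrix whose columns are indexed by the factor `j₀`. -/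
def flatten (j₀ : ι) :
    (⨂[K] j, (β j → K)) ≃ₗ[K] Matrix (∀ j : {j // j ≠ j₀}, β j) (β j₀) K :=
  (Basis.piTensorProduct fun j => Pi.basisFun K (β j)).equivFun ≪≫ₗ
    LinearEquiv.funCongrLeft K K ((Equiv.prodComm _ _).trans (Equiv.piSplitAt j₀ β).symm) ≪≫ₗ
      LinearEquiv.curry K K _ _ ≪≫ₗ Matrix.ofLinearEquiv K

theorem flatten_tprod (j₀ : ι) (v : ∀ j, β j → K) :
    flatten j₀ (tprod K v) =
      Matrix.vecMulVec (segre fun j : {j // j ≠ j₀} => v j) (v j₀) := by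
  ext g b
  have hflat : flatten j₀ (tprod K v) g b = ∏ j, v j ((Equiv.piSplitAt j₀ β).symm (b, g) j) := by
    simp [flatten, Basis.piTensorProduct_repr_tprod_apply]
  rw [hflat, Fintype.prod_eq_mul_prod_subtype_ne _ j₀, mul_comm, Matrix.vecMulVec_apply,
    segre_apply]
  congr 1
  · refine Fintype.prod_congr _ _ fun j => ?_
    simp [j.2]
  · simp

end Flatten

section Tensor

variable {κ ι : Type*} [Fintype κ] [Fintype ι] [DecidableEq ι]

/-- The decomposition `∑ l, tprod K (x l)` of a tensor into decomposable tensors is unique up to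
permutation of its summands. -/
def IsUniqueDecomposition {K : Type*} [Field K] {β : ι → Type*} (x : κ → ∀ j, β j → K) : Prop :=
  ∀ y : κ → ∀ j, β j → K, ∑ l, tprod K (y l) = ∑ l, tprod K (x l) →
    ∃ σ : Equiv.Perm κ, ∀ l, tprod K (y l) = tprod K (x (σ l))

theorem isUniqueDecomposition_of_spanMeetsOnlyAt {β : ι → Type*} [∀ j, Finite (β j)] {K : Type*}
    [Field K] {j₀ : ι} {x : κ → ∀ j, β j → K}
    (hind : LinearIndependent K fun m => segre fun j : {j // j ≠ j₀} => x m j)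
    (hspan : SpanMeetsOnlyAt K (Set.range segre) fun m => segre fun j : {j // j ≠ j₀} => x m j)
    (hind₀ : LinearIndependent K fun m => x m j₀) : IsUniqueDecomposition x := by
  have (j : ι) : Fintype (β j) := Fintype.ofFinite _
  intro y h
  have hflat := congrArg (flatten j₀) h
  simp only [map_sum, flatten_tprod] at hflat
  obtain ⟨σ, hσ⟩ := exists_perm_vecMulVec_eq hind hind₀ hspan (fun l => ⟨_, rfl⟩) hflat
  refine ⟨σ, fun l => (flatten j₀).injective ?_⟩
  rw [flatten_tprod, flatten_tprod, hσ]

variable {a : ι → ℕ} {k : Type*} [Field k]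

omit [Fintype κ] [Fintype ι] [DecidableEq ι] in
theorem eventually_factors_ne_zero [Finite κ] [Finite ι] :
    ∀ᶠ z in generic (κ × Σ j, Fin (a j + 1)) k, ∀ m j, factors z m j ≠ 0 := by
  simp only [Filter.eventually_all]
  exact fun m j => ⟨MvPolynomial.X (m, ⟨j, 0⟩), MvPolynomial.X_ne_zero _, fun z hz h =>
    hz (by simpa [factors] using congrFun h 0)⟩

theorem eventually_isUniqueDecomposition [CharZero k] {j₀ : ι}
    (hcard : Fintype.card κ + ∑ j : {j // j ≠ j₀}, a j + 1 ≤ ∏ j : {j // j ≠ j₀}, (a j + 1))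
    (hcard₀ : Fintype.card κ ≤ a j₀ + 1) :
    ∀ᶠ z in generic (κ × Σ j, Fin (a j + 1)) k, IsUniqueDecomposition (factors z) := by
  let e (w : κ × Σ j : {j // j ≠ j₀}, Fin (a j + 1)) : κ × Σ j, Fin (a j + 1) :=
    (w.1, ⟨w.2.1, w.2.2⟩)
  have he : e.Injective := by
    rintro ⟨m, ⟨j, hj⟩, b⟩ ⟨m', ⟨j', hj'⟩, b'⟩ h
    simp_all [e]
  let e₀ (w : κ × Fin (a j₀ + 1)) : κ × Σ j, Fin (a j + 1) := (w.1, ⟨j₀, w.2⟩)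
  have he₀ : e₀.Injective := by
    rintro ⟨m, b⟩ ⟨m', b'⟩ h
    simp_all [e₀]
  filter_upwards [
    (tendsto_comp_generic he).eventually (eventually_linearIndependent_segre_factors
      (by simp only [Fintype.card_fin]; lia)),
    (tendsto_comp_generic he).eventually (eventually_spanMeetsOnlyAt hcard),
    (tendsto_comp_generic he₀).eventually (eventually_linearIndependent_curry
      (by rwa [Fintype.card_fin]))] with z hind hspan hind₀
  exact isUniqueDecomposition_of_spanMeetsOnlyAt hind hspan hind₀

theorem identifiable_of_eventually_isUniqueDecomposition {q : ℕ} {a : Fin q → ℕ} {k : ℕ}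
    (h : ∀ᶠ z in generic (WIdx q a k) ℂ, IsUniqueDecomposition (factors z)) :
    Identifiable q a k := by
  obtain ⟨F, hF, hFz⟩ := h.and eventually_factors_ne_zero
  have hFp (p : Fin k → ∀ j, Fin (a j + 1) → ℂ) (hp : evalW F p ≠ 0) := hFz _ hp
  refine ⟨F, ?_, fun p hp => ?_⟩
  · by_contra! hzero
    exact hF (MvPolynomial.funext fun z => by
      simpa [evalW, factors] using hzero (factors z))
  · obtain ⟨hunq, hp₀⟩ := hFp p hp
    have hunique (s : Fin k → Ten q a) (hs : ∀ i, IsDecomposable (s i))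
        (hsum : ∑ i, s i = Phi a p) :
        Finset.univ.val.map s = Finset.univ.val.map fun i => tprod ℂ (p i) := by
      choose y _ hy using hs
      obtain rfl : s = fun i => tprod ℂ (y i) := funext hy
      obtain ⟨σ, hσ⟩ := hunq y hsum
      have hcomp : (fun i => tprod ℂ (y i)) = (fun i => tprod ℂ (p i)) ∘ σ := funext hσ
      rw [hcomp, ← Multiset.map_map, Multiset.map_univ_val_equiv]
    exact ⟨⟨fun i => tprod ℂ (p i), fun i => ⟨p i, hp₀ i, rfl⟩, rfl⟩,
      fun s t hs ht hs' ht' => (hunique s hs hs').trans (hunique t ht ht').symm⟩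

end Tensor

theorem stmt_16_general (q : ℕ) (a : Fin q → ℕ) (j₀ : Fin q) (k : ℕ)
    (hk : k + ∑ j ∈ Finset.univ.erase j₀, a j + 1 ≤ ∏ j ∈ Finset.univ.erase j₀, (a j + 1))
    (hk₀ : k ≤ a j₀ + 1) : Identifiable q a k := by
  have hmem (j : Fin q) : j ∈ Finset.univ.erase j₀ ↔ j ≠ j₀ := by simp
  rw [Finset.sum_subtype _ hmem, Finset.prod_subtype _ hmem] at hk
  exact identifiable_of_eventually_isUniqueDecomposition <|
    eventually_isUniqueDecomposition (by rwa [Fintype.card_fin]) (by rwa [Fintype.card_fin])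

/-- the unbalanced case; identifiability for
`k ≤ Π_{i<q}(aᵢ+1) - (1 + Σ_{i<q} aᵢ)` (products and sums over the first `q-1` factors). -/
theorem stmt_16 (q : ℕ) (hq : 3 ≤ q) (a : Fin q → ℕ) (hmono : Monotone a)
    (ha : ∀ i, 0 < a i)
    (hbig : (∏ i ∈ Finset.univ.filter (fun i : Fin q => (i : ℕ) < q - 1), ((a i : ℤ) + 1)) -
        (2 + ∑ i ∈ Finset.univ.filter (fun i : Fin q => (i : ℕ) < q - 1), (a i : ℤ)) ≤ (a ⟨q - 1, by omega⟩ : ℤ))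
    (k : ℕ) (hk : 0 < k)
    (hkb : (k : ℤ) ≤ (∏ i ∈ Finset.univ.filter (fun i : Fin q => (i : ℕ) < q - 1), ((a i : ℤ) + 1)) -
        (1 + ∑ i ∈ Finset.univ.filter (fun i : Fin q => (i : ℕ) < q - 1), (a i : ℤ))) :
    Identifiable q a k := by
  have hlast : Finset.univ.filter (fun i : Fin q => (i : ℕ) < q - 1) =
      Finset.univ.erase ⟨q - 1, by omega⟩ := by
    ext i
    simp only [Finset.mem_filter_univ, Finset.mem_erase, Finset.mem_univ, and_true, ne_eq,
      Fin.ext_iff]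
    omega
  rw [hlast] at hbig hkb
  exact stmt_16_general q a ⟨q - 1, by omega⟩ k (by zify; linarith) (by zify; linarith)
end
end
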